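/- arXiv:1910.12474 — 6 statements merged into one kernel-verified Lean document; each statement's English description precedes it below -/
import Mathlib

section
/- If G is a triangle-free graph on at least 3 vertices with m edges, and λ₁, λ₂ denote the largest and second largest eigenvalues of its adjacency matrix, then λ₁² + λ₂² ≤ m. -/
open Matrix Finset

/-- The adjacency matrix of a finite simple graph is Hermitian (over `ℝ`). -/
theorem adjMatrix_isHermitian {V : Type*} [Fintype V] [DecidableEq V]
    (G : SimpleGraph V) [DecidableRel G.Adj] : (G.adjMatrix ℝ).IsHermitian := by
  unfold Matrix.IsHermitian
  rw [Matrix.conjTranspose_eq_transpose_of_trivial]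
  exact G.isSymm_adjMatrix

/-- The eigenvalues of the adjacency matrix of `G`, as a tuple indexed by `Fin (card V)`. -/
noncomputable def adjEig {V : Type*} [Fintype V] [DecidableEq V]
    (G : SimpleGraph V) [DecidableRel G.Adj] : Fin (Fintype.card V) → ℝ :=
  fun i => (adjMatrix_isHermitian G).eigenvalues ((Fintype.equivFin V).symm i)

/-- `kthEig G k` is the `(k+1)`-st largest adjacency eigenvalue of `G`
(so `kthEig G 0 = λ₁`, `kthEig G 1 = λ₂`, ...); it is `0` if `k` is out of range. -/
noncomputable def kthEig {V : Type*} [Fintype V] [DecidableEq V]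
    (G : SimpleGraph V) [DecidableRel G.Adj] (k : ℕ) : ℝ :=
  if h : k < Fintype.card V then
    adjEig G (Tuple.sort (adjEig G) (Fin.rev ⟨k, h⟩))
  else 0


lemma core_ineq {ι : Type*} [Fintype ι] [DecidableEq ι] (f : ι → ℝ) (p q r : ι) (hpq : p ≠ q)
    (hrp : r ≠ p) (hrq : r ≠ q) (hp : ∀ i, |f i| ≤ f p) (hq : ∀ i, i ≠ p → f i ≤ f q)
    (h1 : ∑ i, f i = 0) (h3 : ∑ i, f i ^ 3 = 0) :
    2 * (f p ^ 2 + f q ^ 2) ≤ ∑ i, f i ^ 2 := by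
  by_contra! hlt
  have ha : 0 ≤ f p := (abs_nonneg _).trans (hp p)
  have hab : f q ≤ f p := (le_abs_self _).trans (hp q)
  rcases lt_or_ge (f q) 0 with hb | hb
  · -- second largest negative
    have key : ∀ i, i ≠ p → 0 < - f i := fun i hi => by linarith [hq i hi]
    have e1 : f p + ∑ i ∈ univ.erase p, f i = 0 := by
      rw [add_sum_erase _ _ (mem_univ p)]; exact h1
    have e3 : f p ^ 3 + ∑ i ∈ univ.erase p, f i ^ 3 = 0 := by
      rw [add_sum_erase _ (fun i => f i ^ 3) (mem_univ p)]; exact h3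
    have lt : ∀ i, i ≠ p → - f i < f p := by
      intro i hi
      obtain ⟨j, hjp, hji⟩ : ∃ j, j ≠ p ∧ j ≠ i := by
        by_cases h : i = q
        · exact ⟨r, hrp, by rw [h]; exact hrq⟩
        · exact ⟨q, hpq.symm, fun h' => h h'.symm⟩
      have : ∑ k ∈ ({i, j} : Finset ι), - f k ≤ ∑ k ∈ univ.erase p, - f k := by
        apply sum_le_sum_of_subset_of_nonneg
        · intro k hk
          simp at hk ⊢
          rcases hk with rfl | rfl <;> assumption
        · intro k hk _
          exact (key k (by simpa using hk)).le
      rw [sum_pair (Ne.symm hji), sum_neg_distrib] at this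
      have := key j hjp
      linarith
    have : ∑ i ∈ univ.erase p, (- f i ^ 3) < ∑ i ∈ univ.erase p, f p ^ 2 * (- f i) := by
      apply sum_lt_sum_of_nonempty ⟨q, by simpa using hpq.symm⟩
      intro i hi
      have hi : i ≠ p := by simpa using hi
      have := key i hi
      have := lt i hi
      nlinarith [mul_pos (key i hi) (mul_pos (sub_pos.2 this) (by linarith : 0 < f p + - f i))]
    rw [← mul_sum, sum_neg_distrib, sum_neg_distrib] at this
    nlinarith
  · obtain ⟨n, -, hn⟩ := exists_min_image univ f ⟨p, mem_univ p⟩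
    have hn : ∀ i, f n ≤ f i := fun i => hn i (mem_univ i)
    rcases le_or_gt 0 (f n) with h0 | h0
    · have := (sum_eq_zero_iff_of_nonneg (fun i _ => h0.trans (hn i))).1 h1
      simp only [fun i => this i (mem_univ i)] at hlt
      simp at hlt
    have hnp : n ≠ p := by rintro rfl; linarith
    have hnq : n ≠ q := by rintro rfl; linarith
    set R := ((univ.erase p).erase q).erase n with hR
    have split : ∀ g : ι → ℝ, ∑ i, g i = g p + g q + g n + ∑ i ∈ R, g i := by
      intro g
      rw [← add_sum_erase univ g (mem_univ p),
        ← add_sum_erase (univ.erase p) g (a := q) (by simpa using hpq.symm),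
        ← add_sum_erase ((univ.erase p).erase q) g (a := n) (by simp [hnp, hnq])]
      ring
    rw [split] at hlt h3
    have bound : ∀ c, (∀ i ∈ R, - c ≤ f i) → - (c * ∑ i ∈ R, f i ^ 2) ≤ ∑ i ∈ R, f i ^ 3 := by
      intro c hc
      rw [mul_sum, ← sum_neg_distrib]
      apply sum_le_sum
      intro i hi
      nlinarith [mul_nonneg (sq_nonneg (f i)) (by linarith [hc i hi] : 0 ≤ f i + c)]
    have hS : 0 ≤ ∑ i ∈ R, f i ^ 2 := sum_nonneg fun i _ => sq_nonneg _
    have hle : ∀ i ∈ R, f i ^ 2 ≤ ∑ i ∈ R, f i ^ 2 := fun i hi =>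
      single_le_sum (f := fun i => f i ^ 2) (fun i _ => sq_nonneg _) hi
    have hTa : - f n ≤ f p := (neg_le_abs _).trans (hp n)
    generalize (∑ i ∈ R, f i ^ 2) = S at *
    generalize (∑ i ∈ R, f i ^ 3) = C at *
    obtain ⟨T, hT⟩ : ∃ T, T = - f n := ⟨_, rfl⟩
    have hfn : f n = - T := by linarith
    have hT0 : 0 < T := by linarith
    rw [hfn] at hlt h3 hTa hn
    rw [neg_neg] at hTa
    generalize f p = a at *
    generalize f q = b at *
    rcases le_or_gt T b with hTb | hTb
    · have := bound T fun i _ => hn i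
      have h4 : T * (S + T ^ 2) < T * (a ^ 2 + b ^ 2) := by
        apply mul_lt_mul_of_pos_left _ hT0; nlinarith
      have h5 : T * (a ^ 2 + b ^ 2) ≤ b * (a ^ 2 + b ^ 2) :=
        mul_le_mul_of_nonneg_right hTb (by positivity)
      nlinarith [mul_nonneg (sub_nonneg.2 hab) (sq_nonneg a)]
    · have hs : 0 < a ^ 2 + b ^ 2 - T ^ 2 := by nlinarith
      obtain ⟨y, hy⟩ : ∃ y, y = √(a ^ 2 + b ^ 2 - T ^ 2) := ⟨_, rfl⟩
      have hy0 : 0 < y := by rw [hy]; exact Real.sqrt_pos.2 hs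
      have hy2 : y ^ 2 = a ^ 2 + b ^ 2 - T ^ 2 := by rw [hy]; exact Real.sq_sqrt hs.le
      have hSy : S < y ^ 2 := by nlinarith
      have := bound y fun i hi => (abs_le_of_sq_le_sq' ((hle i hi).trans hSy.le) hy0.le).1
      have h4 : y * S < y * y ^ 2 := mul_lt_mul_of_pos_left hSy hy0
      have hby : b ≤ y := by nlinarith
      have h6 : a ^ 3 + b ^ 3 < T ^ 3 + y ^ 3 := by nlinarith
      have hya : y ≤ a := by nlinarith
      have tan : ∀ u v : ℝ, 0 ≤ u → 0 ≤ v → 3 / 2 * v * (u ^ 2 - v ^ 2) ≤ u ^ 3 - v ^ 3 := by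
        intro u v hu hv
        nlinarith [mul_nonneg (sq_nonneg (u - v)) (by linarith : 0 ≤ u + v / 2)]
      have hb2 : b ^ 2 = T ^ 2 + y ^ 2 - a ^ 2 := by linarith
      rcases le_total y T with hyT | hyT
      · have t1 := tan a T ha hT0.le
        have t2 := tan b y hb hy0.le
        rw [hb2] at t2
        nlinarith [mul_nonneg (sub_nonneg.2 hyT) (sub_nonneg.2 (pow_le_pow_left₀ hT0.le hTa 2))]
      · have t1 := tan a y ha hy0.le
        have t2 := tan b T hb hT0.le
        rw [hb2] at t2
        nlinarith [mul_nonneg (sub_nonneg.2 hyT) (sub_nonneg.2 (pow_le_pow_left₀ hy0.le hya 2))]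

lemma sum_eig_pow {V : Type*} [Fintype V] [DecidableEq V] {A : Matrix V V ℝ}
    (hA : A.IsHermitian) (k : ℕ) : ∑ i, hA.eigenvalues i ^ k = (A ^ k).trace := by
  conv_rhs => rw [hA.spectral_theorem]
  rw [← map_pow, Unitary.conjStarAlgAut_apply, Matrix.trace_mul_cycle]
  simp [Matrix.diagonal_pow, Matrix.trace]

lemma rayleigh_le {V : Type*} [Fintype V] [DecidableEq V] {A : Matrix V V ℝ}
    (hA : A.IsHermitian) (M : ℝ) (hM : ∀ i, hA.eigenvalues i ≤ M) (x : V → ℝ) :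
    x ⬝ᵥ A *ᵥ x ≤ M * (x ⬝ᵥ x) := by
  have h : (M • (1 : Matrix V V ℝ) - A).PosSemidef := by
    have h1 : (diagonal fun i => M - hA.eigenvalues i).PosSemidef :=
      PosSemidef.diagonal fun i => sub_nonneg.2 (hM i)
    have h2 := h1.mul_mul_conjTranspose_same (hA.eigenvectorUnitary : Matrix V V ℝ)
    convert h2 using 1
    conv_lhs => rw [hA.spectral_theorem]
    have e : (diagonal fun i => M - hA.eigenvalues i) =
      M • (1 : Matrix V V ℝ) - diagonal (RCLike.ofReal ∘ hA.eigenvalues) := by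
      ext i j
      by_cases hij : i = j
      · subst hij; simp
      · simp [hij]
    rw [e, Unitary.conjStarAlgAut_apply, mul_sub, sub_mul, ← star_eq_conjTranspose]
    simp
  have := h.dotProduct_mulVec_nonneg x
  simp [sub_mulVec, smul_mulVec, dotProduct_sub] at this
  linarith

lemma abs_eig_le {V : Type*} [Fintype V] [DecidableEq V] (G : SimpleGraph V)
    [DecidableRel G.Adj] (M : ℝ) (hM : ∀ i, (adjMatrix_isHermitian G).eigenvalues i ≤ M) (i : V) :
    |(adjMatrix_isHermitian G).eigenvalues i| ≤ M := by
  set hA := adjMatrix_isHermitian G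
  set x : V → ℝ := ⇑(hA.eigenvectorBasis i) with hx
  have hxx : x ⬝ᵥ x = 1 := by
    have := hA.eigenvectorBasis.orthonormal.1 i
    have h2 := real_inner_self_eq_norm_sq (hA.eigenvectorBasis i)
    rw [this] at h2
    rw [EuclideanSpace.inner_eq_star_dotProduct] at h2
    simpa using h2
  have he : hA.eigenvalues i = x ⬝ᵥ G.adjMatrix ℝ *ᵥ x := by
    simpa using hA.eigenvalues_eq i
  have h := rayleigh_le hA M hM (fun v => |x v|)
  have hxx' : (fun v => |x v|) ⬝ᵥ (fun v => |x v|) = 1 := by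
    rw [← hxx]; simp [dotProduct]
  rw [hxx', mul_one] at h
  refine le_trans ?_ h
  rw [he, SimpleGraph.dotProduct_mulVec_adjMatrix, SimpleGraph.dotProduct_mulVec_adjMatrix]
  refine (abs_sum_le_sum_abs _ _).trans (sum_le_sum fun u _ => ?_)
  refine (abs_sum_le_sum_abs _ _).trans (sum_le_sum fun v _ => ?_)
  split_ifs <;> simp [abs_mul]

/-- If `G` is a triangle-free graph on at least 3 vertices with `m` edges, then
`λ₁² + λ₂² ≤ m`. -/
theorem stmt_0 {V : Type*} [Fintype V] [DecidableEq V] (G : SimpleGraph V)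
    [DecidableRel G.Adj] (hn : 3 ≤ Fintype.card V) (h3 : G.CliqueFree 3) :
    (kthEig G 0) ^ 2 + (kthEig G 1) ^ 2 ≤ (G.edgeFinset.card : ℝ) := by
  set hA := adjMatrix_isHermitian G
  set f := hA.eigenvalues with hf
  have hmono := Tuple.monotone_sort (adjEig G)
  let σ : Fin (Fintype.card V) ≃ V := (Tuple.sort (adjEig G)).trans (Fintype.equivFin V).symm
  have hσ : ∀ i j, i ≤ j → f (σ i) ≤ f (σ j) := fun i j h => hmono h
  have k0 : kthEig G 0 = f (σ (Fin.rev ⟨0, by omega⟩)) := by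
    rw [kthEig, dif_pos (by omega)]; rfl
  have k1 : kthEig G 1 = f (σ (Fin.rev ⟨1, by omega⟩)) := by
    rw [kthEig, dif_pos (by omega)]; rfl
  rw [k0, k1]
  have t1 : ∑ i, f i = 0 := by
    have := sum_eig_pow hA 1
    simpa using this
  have t2 : ∑ i, f i ^ 2 = 2 * (G.edgeFinset.card : ℝ) := by
    rw [sum_eig_pow hA 2, pow_two, Matrix.trace]
    simp only [Matrix.diag, SimpleGraph.adjMatrix_mul_self_apply_self]
    exact_mod_cast G.sum_degrees_eq_twice_card_edges
  have t3 : ∑ i, f i ^ 3 = 0 := by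
    rw [sum_eig_pow hA 3, Matrix.trace]
    refine sum_eq_zero fun u _ => ?_
    rw [Matrix.diag, pow_succ, pow_two, Matrix.mul_apply]
    refine sum_eq_zero fun v _ => ?_
    rw [Matrix.mul_apply, sum_mul]
    refine sum_eq_zero fun w _ => ?_
    simp only [SimpleGraph.adjMatrix_apply]
    by_contra hne
    have a1 : G.Adj u w := by by_contra h; simp [h] at hne
    have a2 : G.Adj w v := by by_contra h; simp [h] at hne
    have a3 : G.Adj v u := by by_contra h; simp [h] at hne
    exact h3 {u, w, v} (SimpleGraph.is3Clique_triple_iff.2 ⟨a1, a3.symm, a2⟩)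
  have := core_ineq f (σ (Fin.rev ⟨0, by omega⟩)) (σ (Fin.rev ⟨1, by omega⟩))
    (σ (Fin.rev ⟨2, by omega⟩)) (by simp) (by simp) (by simp)
    (abs_eig_le G _ fun i => by
      have := hσ (σ.symm i) (Fin.rev ⟨0, by omega⟩) (by
        rw [Fin.le_def, Fin.val_rev]; simp only; omega)
      simpa using this)
    (fun i hi => by
      have hne : σ.symm i ≠ Fin.rev ⟨0, by omega⟩ := fun h => hi (by rw [← h]; simp)
      have := hσ (σ.symm i) (Fin.rev ⟨1, by omega⟩) (by
        rw [Ne, Fin.ext_iff, Fin.val_rev] at hne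
        rw [Fin.le_def, Fin.val_rev]; simp only at hne ⊢; omega)
      simpa using this) t1 t3
  rw [t2] at this
  linarith
end

section
/- If G is a non-bipartite graph with m edges whose largest adjacency eigenvalue λ₁ satisfies λ₁ ≥ √(m−1), then G contains a triangle, unless G is the disjoint union of a 5-cycle and isolated vertices. -/
open Matrix Finset

open SimpleGraph in
theorem walk_segment {V : Type*} {G : SimpleGraph V} {u v : V} (w : G.Walk u v) (i n : ℕ)
    (h : i + n ≤ w.length) : ∃ q : G.Walk (w.getVert i) (w.getVert (i + n)), q.length = n := by
  induction n with
  | zero => exact ⟨Walk.nil, rfl⟩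
  | succ n ih =>
    obtain ⟨q, hq⟩ := ih (by omega)
    have ha : G.Adj (w.getVert (i + n)) (w.getVert (i + (n + 1))) :=
      w.adj_getVert_succ (by omega)
    exact ⟨q.concat ha, by simp [hq]⟩

/-- A graph that is not 2-colorable contains an induced odd cycle. -/
theorem exists_induced_odd_cycle {V : Type*} {G : SimpleGraph V} (h : ¬ G.Colorable 2) :
    ∃ (L : ℕ) (v : ℕ → V), Odd L ∧ 3 ≤ L ∧ ∀ i j, i < j → j < L →
      v i ≠ v j ∧ (G.Adj (v i) (v j) ↔ (j = i + 1 ∨ (i = 0 ∧ j = L - 1))) := by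
  classical
  rw [SimpleGraph.two_colorable_iff_forall_loop_even] at h
  push Not at h
  have hex : ∃ L, Odd L ∧ ∃ u, ∃ w : G.Walk u u, w.length = L := by
    obtain ⟨u, w, hw⟩ := h
    exact ⟨w.length, Nat.not_even_iff_odd.mp hw, u, w, rfl⟩
  obtain ⟨hodd, u, w, hw⟩ := Nat.find_spec hex
  have hmin : ∀ {x : V} (q : G.Walk x x), Odd q.length → Nat.find hex ≤ q.length :=
    fun {x} q hq => Nat.find_min' hex ⟨hq, x, q, rfl⟩
  set L := Nat.find hex with hL
  clear_value L
  have h0 : w.getVert 0 = u := w.getVert_zero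
  have hend : w.getVert L = u := by rw [← hw]; exact w.getVert_length
  have hL3 : 3 ≤ L := by
    by_contra hlt
    have hL1 : L = 1 := by obtain ⟨k, hk⟩ := hodd; omega
    have := w.adj_getVert_succ (i := 0) (by omega)
    rw [h0, show 0 + 1 = L by omega, hend] at this
    exact this.ne rfl
  refine ⟨L, w.getVert, hodd, hL3, fun i j hij hj => ?_⟩
  obtain ⟨q1, hq1⟩ := walk_segment w 0 i (by omega)
  obtain ⟨q2, hq2⟩ := walk_segment w i (j - i) (by omega)
  obtain ⟨q3, hq3⟩ := walk_segment w j (L - j) (by omega)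
  have eij : w.getVert (i + (j - i)) = w.getVert j := by congr 1; omega
  have ejL : w.getVert (j + (L - j)) = w.getVert 0 := by
    have : j + (L - j) = L := by omega
    rw [this, h0]; exact hend
  have e0i : w.getVert (0 + i) = w.getVert i := by congr 1; omega
  constructor
  · intro heq
    let r1 : G.Walk (w.getVert i) (w.getVert i) := q2.copy rfl (eij.trans heq.symm)
    let r2 : G.Walk (w.getVert j) (w.getVert j) :=
      (q3.copy rfl ejL).append (q1.copy rfl (e0i.trans heq))
    have l1 : r1.length = j - i := by simp [r1, hq2]
    have l2 : r2.length = (L - j) + i := by simp [r2, hq1, hq3]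
    rcases Nat.even_or_odd (j - i) with he | ho
    · have : Odd r2.length := by
        rw [l2]
        obtain ⟨a, ha⟩ := he
        obtain ⟨b, hb⟩ := hodd
        exact ⟨b - a, by omega⟩
      have := hmin r2 this
      omega
    · have := hmin r1 (by rw [l1]; exact ho)
      omega
  · constructor
    · intro hadj
      let r1 : G.Walk (w.getVert i) (w.getVert i) := (q2.copy rfl eij).concat hadj.symm
      let r2 : G.Walk (w.getVert j) (w.getVert j) :=
        ((q3.copy rfl ejL).append (q1.copy rfl e0i)).concat hadj
      have l1 : r1.length = j - i + 1 := by simp [r1, hq2]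
      have l2 : r2.length = (L - j) + i + 1 := by simp [r2, hq1, hq3]
      rcases Nat.even_or_odd (j - i) with he | ho
      · have := hmin r1 (by rw [l1]; exact he.add_one)
        omega
      · have : Odd r2.length := by
          rw [l2]
          obtain ⟨a, ha⟩ := ho
          obtain ⟨b, hb⟩ := hodd
          exact ⟨b - a, by omega⟩
        have := hmin r2 this
        omega
    · rintro (h | ⟨h, h'⟩)
      · subst h
        exact w.adj_getVert_succ (by omega)
      · subst h
        have := w.adj_getVert_succ (i := j) (by omega)
        rw [show j + 1 = L by omega, hend] at this
        have h4 := this.symm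
        simpa [h0] using h4

theorem count_ge {V : Type*} [Fintype V] [DecidableEq V] (A U : Matrix V V ℝ) (lam : V → ℝ)
    (hU : U * Uᵀ = 1) (hA : A = U * Matrix.diagonal lam * Uᵀ) {k d : ℕ} (f : Fin k → V)
    (hf : Function.Injective f) (B : Matrix (Fin k) (Fin k) ℝ) (hB : ∀ i j, A (f i) (f j) = B i j)
    (W : Matrix (Fin k) (Fin d) ℝ) (hW : ∀ t, W *ᵥ t = 0 → t = 0) (c : ℝ)
    (hc : ∀ t, c * ((W *ᵥ t) ⬝ᵥ (W *ᵥ t)) ≤ (W *ᵥ t) ⬝ᵥ (B *ᵥ (W *ᵥ t))) :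
    d ≤ #{i | c ≤ lam i} := by
  by_contra hlt
  push Not at hlt
  set E : Matrix V (Fin k) ℝ := fun v i => if f i = v then 1 else 0 with hE
  have hEa : ∀ v i, E v i = if f i = v then 1 else 0 := fun _ _ => rfl
  have hEE : Eᵀ * E = 1 := by
    ext i j
    simp [hEa, Matrix.mul_apply, Matrix.one_apply, hf.eq_iff, eq_comm]
  have hEAE : Eᵀ * A * E = B := by
    ext i j
    simp [hEa, Matrix.mul_apply, ← hB]
  set S : Finset V := {i | c ≤ lam i} with hS
  set P : Matrix V (Fin k) ℝ := Uᵀ * E with hP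
  set Q : Matrix S (Fin d) ℝ := (P * W).submatrix Subtype.val id with hQ
  have hker : LinearMap.ker Q.mulVecLin ≠ ⊥ := by
    apply LinearMap.ker_ne_bot_of_finrank_lt
    simpa using hlt
  obtain ⟨t, ht, ht0⟩ := (Submodule.ne_bot_iff _).1 hker
  apply ht0
  apply hW
  set y := W *ᵥ t with hy
  set z := P *ᵥ y with hz
  have hzS : ∀ i ∈ S, z i = 0 := by
    intro i hi
    have := congrFun (LinearMap.mem_ker.1 ht) ⟨i, hi⟩
    rw [hz, hy, Matrix.mulVec_mulVec]
    simpa [hQ, Matrix.mulVec, dotProduct] using this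
  have hzz : z ⬝ᵥ z = y ⬝ᵥ y := by
    rw [hz, Matrix.dotProduct_mulVec, Matrix.vecMul_mulVec, hP, Matrix.transpose_mul,
      Matrix.transpose_transpose]
    have : Eᵀ * U * (Uᵀ * E) = 1 := by
      rw [Matrix.mul_assoc, ← Matrix.mul_assoc U, hU, Matrix.one_mul, hEE]
    rw [this]
    simp
  have hzD : z ⬝ᵥ (Matrix.diagonal lam *ᵥ z) = y ⬝ᵥ (B *ᵥ y) := by
    have hB2 : B = Pᵀ * (Matrix.diagonal lam * P) := by
      rw [← hEAE, hA, hP, Matrix.transpose_mul, Matrix.transpose_transpose]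
      simp only [Matrix.mul_assoc]
    rw [hB2, ← Matrix.mulVec_mulVec, ← Matrix.mulVec_mulVec, Matrix.dotProduct_mulVec y,
      Matrix.vecMul_transpose]
  have hcy := hc t
  rw [← hy, ← hzz, ← hzD] at hcy
  have hsum : ∑ i, (c - lam i) * z i ^ 2 ≤ 0 := by
    have : ∑ i, (c - lam i) * z i ^ 2 = c * (z ⬝ᵥ z) - z ⬝ᵥ (Matrix.diagonal lam *ᵥ z) := by
      simp only [dotProduct, Matrix.mulVec_diagonal, Finset.mul_sum, ← Finset.sum_sub_distrib]
      exact Finset.sum_congr rfl fun i _ => by ring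
    linarith
  have hnn : ∀ i ∈ Finset.univ, 0 ≤ (c - lam i) * z i ^ 2 := by
    intro i _
    by_cases hi : i ∈ S
    · simp [hzS i hi]
    · have : lam i < c := by simpa [hS] using hi
      have := sub_pos.2 this
      positivity
  have hz0 : z = 0 := by
    funext i
    by_cases hi : i ∈ S
    · exact hzS i hi
    · have h1 : lam i < c := by simpa [hS] using hi
      have h2 := (Finset.sum_eq_zero_iff_of_nonneg hnn).1
        (le_antisymm hsum (Finset.sum_nonneg hnn)) i (Finset.mem_univ i)
      have h3 : c - lam i ≠ 0 := (sub_pos.2 h1).ne'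
      simpa [h3] using h2
  rw [hz0] at hzz
  exact dotProduct_self_eq_zero.1 (by simpa using hzz.symm)

theorem spectral_facts {V : Type*} [Fintype V] [DecidableEq V] (A : Matrix V V ℝ)
    (hA : A.IsHermitian) : ∃ U : Matrix V V ℝ, U * Uᵀ = 1 ∧
      A = U * Matrix.diagonal hA.eigenvalues * Uᵀ ∧
      ∑ i, hA.eigenvalues i ^ 2 = Matrix.trace (A * A) ∧
      ∑ i, hA.eigenvalues i ^ 3 = Matrix.trace (A * A * A) := by
  set lam := hA.eigenvalues with hlam
  obtain ⟨U, h1, h2, h3⟩ : ∃ U : Matrix V V ℝ, U * Uᵀ = 1 ∧ Uᵀ * U = 1 ∧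
      A = U * Matrix.diagonal lam * Uᵀ := by
    refine ⟨hA.eigenvectorUnitary, ?_, ?_, ?_⟩
    · have := Unitary.coe_mul_star_self hA.eigenvectorUnitary
      rwa [Unitary.coe_star, Matrix.star_eq_conjTranspose, Matrix.conjTranspose_eq_transpose_of_trivial] at this
    · have := Unitary.coe_star_mul_self hA.eigenvectorUnitary
      rwa [Matrix.star_eq_conjTranspose, Matrix.conjTranspose_eq_transpose_of_trivial] at this
    · have := hA.spectral_theorem
      rw [Unitary.conjStarAlgAut_apply, Matrix.star_eq_conjTranspose,
        Matrix.conjTranspose_eq_transpose_of_trivial] at this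
      exact this
  refine ⟨U, h1, h3, ?_, ?_⟩
  · have : A * A = U * (Matrix.diagonal lam * Matrix.diagonal lam) * Uᵀ := by
      calc A * A = U * Matrix.diagonal lam * (Uᵀ * U) * Matrix.diagonal lam * Uᵀ := by
            nth_rewrite 1 2 [h3]; simp only [Matrix.mul_assoc]
        _ = _ := by rw [h2]; simp only [Matrix.mul_assoc, Matrix.one_mul]
    rw [this, Matrix.trace_mul_comm, ← Matrix.mul_assoc, h2, Matrix.one_mul,
      Matrix.diagonal_mul_diagonal, Matrix.trace_diagonal]
    exact Finset.sum_congr rfl fun i _ => by ring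
  · have : A * A * A = U * (Matrix.diagonal lam * Matrix.diagonal lam * Matrix.diagonal lam) * Uᵀ := by
      calc A * A * A = U * Matrix.diagonal lam * (Uᵀ * U) * Matrix.diagonal lam * (Uᵀ * U)
              * Matrix.diagonal lam * Uᵀ := by
            nth_rewrite 1 2 3 [h3]; simp only [Matrix.mul_assoc]
        _ = _ := by rw [h2]; simp only [Matrix.mul_assoc, Matrix.one_mul]
    rw [this, Matrix.trace_mul_comm, ← Matrix.mul_assoc, h2, Matrix.one_mul,
      Matrix.diagonal_mul_diagonal, Matrix.diagonal_mul_diagonal, Matrix.trace_diagonal]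
    exact Finset.sum_congr rfl fun i _ => by ring

theorem trace_sq {V : Type*} [Fintype V] [DecidableEq V] (G : SimpleGraph V)
    [DecidableRel G.Adj] :
    Matrix.trace (G.adjMatrix ℝ * G.adjMatrix ℝ) = 2 * (G.edgeFinset.card : ℝ) := by
  have h := G.sum_degrees_eq_twice_card_edges
  simp only [Matrix.trace, Matrix.diag_apply, SimpleGraph.adjMatrix_mul_self_apply_self]
  exact_mod_cast h

theorem trace_cube {V : Type*} [Fintype V] [DecidableEq V] (G : SimpleGraph V)
    [DecidableRel G.Adj] (h : G.CliqueFree 3) :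
    Matrix.trace (G.adjMatrix ℝ * G.adjMatrix ℝ * G.adjMatrix ℝ) = 0 := by
  simp only [Matrix.trace, Matrix.diag_apply, Matrix.mul_apply, SimpleGraph.adjMatrix_apply,
    Finset.sum_mul]
  refine Finset.sum_eq_zero fun i _ => Finset.sum_eq_zero fun j _ =>
    Finset.sum_eq_zero fun k _ => ?_
  by_cases h1 : G.Adj i k <;> by_cases h2 : G.Adj k j <;> by_cases h3 : G.Adj j i <;>
    simp [h1, h2, h3]
  exact h {i, k, j} (SimpleGraph.is3Clique_triple_iff.2 ⟨h1, h3.symm, h2⟩)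

/-- Final numeric contradiction when the odd girth is at least 7. -/
theorem numeric_long {V : Type*} [Fintype V] [DecidableEq V] (lam : V → ℝ) (m s : ℝ)
    (h2 : ∑ i, lam i ^ 2 = 2 * m) (h3 : ∑ i, lam i ^ 3 = 0) (hs : 0 ≤ s) (hsm : s ^ 2 = m - 1)
    (i0 : V) (hi0 : s ≤ lam i0) (hc : 3 ≤ #{i | 1 ≤ lam i}) : False := by
  have hcard : 1 < #(({i | 1 ≤ lam i} : Finset V).erase i0) := by
    have := Finset.pred_card_le_card_erase (s := ({i | 1 ≤ lam i} : Finset V)) (a := i0)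
    omega
  obtain ⟨i1, hi1, i2, hi2, h12⟩ := Finset.one_lt_card.1 hcard
  simp only [Finset.mem_erase, Finset.mem_filter, Finset.mem_univ, true_and] at hi1 hi2
  obtain ⟨h10, hl1⟩ := hi1
  obtain ⟨h20, hl2⟩ := hi2
  have sq0 : s ^ 2 ≤ lam i0 ^ 2 := by gcongr
  have sub : ∀ (g : V → ℝ), (∀ i, 0 ≤ g i) → g i0 + g i1 + g i2 ≤ ∑ i, g i := by
    intro g hg
    calc g i0 + g i1 + g i2 = ∑ i ∈ {i0, i1, i2}, g i := by
          rw [Finset.sum_insert (by simp [h10.symm, h20.symm]), Finset.sum_pair h12]; ring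
      _ ≤ _ := Finset.sum_le_sum_of_subset_of_nonneg (Finset.subset_univ _) fun i _ _ => hg i
  have sub4 : ∀ j, j ≠ i0 → j ≠ i1 → j ≠ i2 →
      lam i0 ^ 2 + lam i1 ^ 2 + lam i2 ^ 2 + lam j ^ 2 ≤ 2 * m := by
    intro j hj0 hj1 hj2
    rw [← h2]
    calc _ = ∑ i ∈ {j, i0, i1, i2}, lam i ^ 2 := by
          rw [Finset.sum_insert (by simp [hj0, hj1, hj2]),
            Finset.sum_insert (by simp [h10.symm, h20.symm]), Finset.sum_pair h12]; ring
      _ ≤ _ := Finset.sum_le_sum_of_subset_of_nonneg (Finset.subset_univ _)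
        fun i _ _ => sq_nonneg _
  have hlow : ∀ j, -s ≤ lam j := by
    intro j
    by_cases hj0 : j = i0
    · subst hj0; linarith
    by_cases hj1 : j = i1
    · subst hj1; linarith
    by_cases hj2 : j = i2
    · subst hj2; linarith
    have := sub4 j hj0 hj1 hj2
    have : lam j ^ 2 ≤ s ^ 2 := by nlinarith
    exact (abs_le_of_sq_le_sq' this hs).1
  have key := sub (fun i => lam i ^ 2 * (lam i + s)) fun i =>
    mul_nonneg (sq_nonneg _) (by linarith [hlow i])
  have tot : ∑ i, lam i ^ 2 * (lam i + s) = 2 * m * s := by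
    have : ∑ i, lam i ^ 2 * (lam i + s) = ∑ i, lam i ^ 3 + (∑ i, lam i ^ 2) * s := by
      rw [Finset.sum_mul, ← Finset.sum_add_distrib]
      exact Finset.sum_congr rfl fun i _ => by ring
    rw [this, h2, h3]; ring
  simp only [tot] at key
  have e0 : s ^ 2 * (s + s) ≤ lam i0 ^ 2 * (lam i0 + s) := by gcongr
  have e1 : 1 ^ 2 * (1 + s) ≤ lam i1 ^ 2 * (lam i1 + s) := by gcongr
  have e2 : 1 ^ 2 * (1 + s) ≤ lam i2 ^ 2 * (lam i2 + s) := by gcongr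
  have hm : m = s ^ 2 + 1 := by linarith
  subst hm
  nlinarith

theorem numeric_core (s a b : ℝ) (hs0 : 0 ≤ s) (hs : 5 ≤ s ^ 2) (hb : 8 / 5 ≤ b) (hab : b ≤ a)
    (hsq : a ^ 2 + b ^ 2 ≤ s ^ 2 + 32 / 25) :
    0 < s ^ 2 * (s - a) + 54 / 125 + a * (b ^ 2 - 32 / 25) - b ^ 3 := by
  obtain ⟨a', ha'0, ha'⟩ : ∃ a', 0 ≤ a' ∧ a' ^ 2 = s ^ 2 + 32 / 25 - b ^ 2 :=
    ⟨_, Real.sqrt_nonneg _, Real.sq_sqrt (by nlinarith)⟩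
  have haa' : a ≤ a' := abs_le_of_sq_le_sq' (by nlinarith) ha'0 |>.2
  obtain ⟨A, hA0, hA⟩ : ∃ A, 0 ≤ A ∧ A ^ 2 = s ^ 2 - 32 / 25 :=
    ⟨_, Real.sqrt_nonneg _, Real.sq_sqrt (by linarith)⟩
  have hs1 : 223 / 100 ≤ s := by nlinarith
  have hA1 : 192 / 100 ≤ A := by nlinarith
  have haA : a' ≤ A := abs_le_of_sq_le_sq' (by nlinarith) hA0 |>.2
  have step1 : a * a' ^ 2 ≤ a' ^ 3 := by nlinarith [mul_nonneg (sub_nonneg.2 haa') (sq_nonneg a')]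
  have step2 : a' ^ 3 + b ^ 3 ≤ A ^ 3 + (8 / 5) ^ 3 := by
    have hd : (A - a') * (A + a') = (b - 8 / 5) * (b + 8 / 5) := by nlinarith
    have hba : b ≤ a' := hab.trans haa'
    have hpos : 0 < (A + a') := by linarith
    have hge : (b ^ 2 + 8 / 5 * b + 64 / 25) * (A + a') ≤
        (A ^ 2 + A * a' + a' ^ 2) * (b + 8 / 5) := by
      have x1 : 0 ≤ a' - b := by linarith
      have x2 : 0 ≤ A - a' := by linarith
      have x3 : 0 ≤ b - 8 / 5 := by linarith
      obtain ⟨p, hp⟩ : ∃ p, p = a' - b := ⟨_, rfl⟩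
      obtain ⟨q, hq⟩ : ∃ q, q = A - a' := ⟨_, rfl⟩
      obtain ⟨r, hr⟩ : ∃ r, r = b - 8 / 5 := ⟨_, rfl⟩
      have e1 : b = 8 / 5 + r := by linarith
      have e2 : a' = 8 / 5 + r + p := by linarith
      have e3 : A = 8 / 5 + r + p + q := by linarith
      rw [← hp] at x1; rw [← hq] at x2; rw [← hr] at x3
      rw [e3, e2, e1, ← sub_nonneg]
      ring_nf
      positivity
    have : 0 ≤ (A ^ 3 - a' ^ 3 - (b ^ 3 - (8 / 5) ^ 3)) * (A + a') := by
      have e : (A ^ 3 - a' ^ 3 - (b ^ 3 - (8 / 5) ^ 3)) * (A + a') =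
        (b - 8 / 5) * ((A ^ 2 + A * a' + a' ^ 2) * (b + 8 / 5)
          - (b ^ 2 + 8 / 5 * b + 64 / 25) * (A + a')) := by
        linear_combination (A ^ 2 + A * a' + a' ^ 2) * hd
      rw [e]
      exact mul_nonneg (by linarith) (by linarith)
    have := nonneg_of_mul_nonneg_left this hpos
    linarith
  have step3 : A ^ 3 + (8 / 5) ^ 3 < s ^ 3 + 54 / 125 := by
    have hd : (s - A) * (s + A) = 32 / 25 := by nlinarith
    have hsA : 0 < s + A := by linarith
    have hsA2 : 0 ≤ s - A := by
      by_contra hneg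
      push Not at hneg
      nlinarith
    have e : s ^ 3 - A ^ 3 = (s - A) * (s + A) * (s + A) * (3 / 4) + (s - A) ^ 3 / 4 := by ring
    have : 0 ≤ (s - A) ^ 3 := by positivity
    rw [hd] at e
    nlinarith
  have : s ^ 2 = a' ^ 2 + b ^ 2 - 32 / 25 := by linarith
  have e : s ^ 2 * (s - a) + 54 / 125 + a * (b ^ 2 - 32 / 25) - b ^ 3 =
    s ^ 3 + 54 / 125 - a * a' ^ 2 - b ^ 3 := by
    linear_combination (-a) * this
  rw [e]
  linarith

/-- Final numeric contradiction when the odd girth is 5 and there are at least 6 edges. -/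
theorem numeric_short {V : Type*} [Fintype V] [DecidableEq V] (lam : V → ℝ) (m s : ℝ)
    (h2 : ∑ i, lam i ^ 2 = 2 * m) (h3 : ∑ i, lam i ^ 3 = 0) (hs : 0 ≤ s) (hsm : s ^ 2 = m - 1)
    (hs5 : 5 ≤ s ^ 2) (i0 : V) (hi0 : s ≤ lam i0) (hc : 3 ≤ #{i | 3 / 5 ≤ lam i})
    (hd : 2 ≤ #{i | 8 / 5 ≤ -lam i}) : False := by
  have hcard : 1 < #(({i | 3 / 5 ≤ lam i} : Finset V).erase i0) := by
    have := Finset.pred_card_le_card_erase (s := ({i | 3 / 5 ≤ lam i} : Finset V)) (a := i0)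
    omega
  obtain ⟨i1, hi1, i2, hi2, h12⟩ := Finset.one_lt_card.1 hcard
  simp only [Finset.mem_erase, Finset.mem_filter, Finset.mem_univ, true_and] at hi1 hi2
  obtain ⟨h10, hl1⟩ := hi1
  obtain ⟨h20, hl2⟩ := hi2
  obtain ⟨j1, -, hj1⟩ := Finset.exists_min_image Finset.univ lam ⟨i0, Finset.mem_univ i0⟩
  have hcard2 : 0 < #(({i | 8 / 5 ≤ -lam i} : Finset V).erase j1) := by
    have := Finset.pred_card_le_card_erase (s := ({i | 8 / 5 ≤ -lam i} : Finset V)) (a := j1)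
    omega
  obtain ⟨j2, hj2⟩ := Finset.card_pos.1 hcard2
  simp only [Finset.mem_erase, Finset.mem_filter, Finset.mem_univ, true_and] at hj2
  obtain ⟨hj21, hb⟩ := hj2
  have hab : -lam j2 ≤ -lam j1 := neg_le_neg (hj1 j2 (Finset.mem_univ _))
  have hne : ∀ x y, 0 ≤ lam x → lam y < 0 → x ≠ y := by
    rintro x y hx hy rfl; linarith
  have n01 := hne i0 j1 (by linarith) (by linarith)
  have n02 := hne i0 j2 (by linarith) (by linarith)
  have n11 := hne i1 j1 (by linarith) (by linarith)
  have n12 := hne i1 j2 (by linarith) (by linarith)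
  have n21 := hne i2 j1 (by linarith) (by linarith)
  have n22 := hne i2 j2 (by linarith) (by linarith)
  have sub : ∀ (g : V → ℝ), (∀ i, 0 ≤ g i) →
      g i0 + g i1 + g i2 + g j1 + g j2 ≤ ∑ i, g i := by
    intro g hg
    calc g i0 + g i1 + g i2 + g j1 + g j2 = ∑ i ∈ {i0, i1, i2, j1, j2}, g i := by
          rw [Finset.sum_insert (by simp [h10.symm, h20.symm, n01, n02]),
            Finset.sum_insert (by simp [h12, n11, n12]),
            Finset.sum_insert (by simp [n21, n22]), Finset.sum_pair hj21.symm]; ring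
      _ ≤ _ := Finset.sum_le_sum_of_subset_of_nonneg (Finset.subset_univ _) fun i _ _ => hg i
  have hsq := sub (fun i => lam i ^ 2) fun i => sq_nonneg _
  have key := sub (fun i => lam i ^ 2 * (lam i + -lam j1)) fun i =>
    mul_nonneg (sq_nonneg _) (by linarith [hj1 i (Finset.mem_univ _)])
  have tot : ∑ i, lam i ^ 2 * (lam i + -lam j1) = 2 * m * -lam j1 := by
    have : ∑ i, lam i ^ 2 * (lam i + -lam j1)
        = ∑ i, lam i ^ 3 + (∑ i, lam i ^ 2) * -lam j1 := by
      rw [Finset.sum_mul, ← Finset.sum_add_distrib]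
      exact Finset.sum_congr rfl fun i _ => by ring
    rw [this, h2, h3]; ring
  simp only [tot] at key
  simp only [h2] at hsq
  obtain ⟨a, ha⟩ : ∃ a, a = -lam j1 := ⟨_, rfl⟩
  obtain ⟨b, hb'⟩ : ∃ b, b = -lam j2 := ⟨_, rfl⟩
  have ea : lam j1 = -a := by linarith
  have eb : lam j2 = -b := by linarith
  rw [ea, eb] at hab hsq key
  rw [eb] at hb
  simp only [neg_neg] at hab hb key
  have ha0 : 0 ≤ a := by linarith
  have sq0 : s ^ 2 ≤ lam i0 ^ 2 := by gcongr
  have sq1 : (3 / 5) ^ 2 ≤ lam i1 ^ 2 := by gcongr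
  have sq2 : (3 / 5) ^ 2 ≤ lam i2 ^ 2 := by gcongr
  have e0 : s ^ 2 * (s + a) ≤ lam i0 ^ 2 * (lam i0 + a) := by gcongr
  have e1 : (3 / 5) ^ 2 * (3 / 5 + a) ≤ lam i1 ^ 2 * (lam i1 + a) := by gcongr
  have e2 : (3 / 5) ^ 2 * (3 / 5 + a) ≤ lam i2 ^ 2 * (lam i2 + a) := by gcongr
  have hm : m = s ^ 2 + 1 := by linarith
  subst hm
  have core := numeric_core s a b hs hs5 hb hab (by nlinarith)
  nlinarith

section forms

/-- Adjacency matrix of the `n`-cycle with vertices `0, …, n-1`. -/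
def cycB (n : ℕ) : Matrix (Fin n) (Fin n) ℝ := fun i j =>
  if (j : ℕ) = i + 1 ∨ (i : ℕ) = j + 1 ∨ ((i : ℕ) = 0 ∧ (j : ℕ) = n - 1) ∨
    ((j : ℕ) = 0 ∧ (i : ℕ) = n - 1) then 1 else 0

theorem cycB_five : cycB 5 = !![0, 1, 0, 0, 1; 1, 0, 1, 0, 0; 0, 1, 0, 1, 0; 0, 0, 1, 0, 1;
    1, 0, 0, 1, 0] := by
  ext i j
  fin_cases i <;> fin_cases j <;> simp [cycB]

theorem cycB_seven : cycB 7 = !![0, 1, 0, 0, 0, 0, 1; 1, 0, 1, 0, 0, 0, 0; 0, 1, 0, 1, 0, 0, 0;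
    0, 0, 1, 0, 1, 0, 0; 0, 0, 0, 1, 0, 1, 0; 0, 0, 0, 0, 1, 0, 1; 1, 0, 0, 0, 0, 1, 0] := by
  ext i j
  fin_cases i <;> fin_cases j <;> simp [cycB]

/-- Vertices of an induced `3K₂` in a long cycle. -/
def pts : Fin 6 → ℕ := ![0, 1, 3, 4, 6, 7]

/-- Adjacency matrix of `3K₂`. -/
def matB : Matrix (Fin 6) (Fin 6) ℝ := fun i j =>
  if pts j = pts i + 1 ∨ pts i = pts j + 1 then 1 else 0

theorem matB_eq : matB = !![0, 1, 0, 0, 0, 0; 1, 0, 0, 0, 0, 0; 0, 0, 0, 1, 0, 0;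
    0, 0, 1, 0, 0, 0; 0, 0, 0, 0, 0, 1; 0, 0, 0, 0, 1, 0] := by
  ext i j
  fin_cases i <;> fin_cases j <;> simp [matB, pts]

/-- Test space for the large eigenvalues of `C₅`. -/
def W5 : Matrix (Fin 5) (Fin 3) ℝ := !![1, 10, 0; 1, 3, 8; 1, -8, 5; 1, -8, -5; 1, 3, -8]

/-- Test space for the small eigenvalues of `C₅`. -/
def N5 : Matrix (Fin 5) (Fin 2) ℝ := !![10, 0; -8, 5; 3, -8; 3, 8; -8, -5]

/-- Test space for the large eigenvalues of `C₇`. -/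
def W7 : Matrix (Fin 7) (Fin 3) ℝ := !![1, 10, 0; 1, 6, 8; 1, -2, 10; 1, -9, 4; 1, -9, -4;
  1, -2, -10; 1, 6, -8]

/-- Test space for `3K₂`. -/
def W6 : Matrix (Fin 6) (Fin 3) ℝ := !![1, 0, 0; 1, 0, 0; 0, 1, 0; 0, 1, 0; 0, 0, 1; 0, 0, 1]

theorem W5_inj (t : Fin 3 → ℝ) (h : W5 *ᵥ t = 0) : t = 0 := by
  have h0 := congrFun h 0
  have h1 := congrFun h 1
  have h2 := congrFun h 4
  simp [W5, Matrix.mulVec, dotProduct, Fin.sum_univ_succ] at h0 h1 h2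
  ext i
  fin_cases i <;> simp <;> linarith

theorem N5_inj (t : Fin 2 → ℝ) (h : N5 *ᵥ t = 0) : t = 0 := by
  have h0 := congrFun h 0
  have h1 := congrFun h 1
  simp [N5, Matrix.mulVec, dotProduct, Fin.sum_univ_succ] at h0 h1
  ext i
  fin_cases i <;> simp <;> linarith

theorem W7_inj (t : Fin 3 → ℝ) (h : W7 *ᵥ t = 0) : t = 0 := by
  have h0 := congrFun h 0
  have h1 := congrFun h 1
  have h2 := congrFun h 6
  simp [W7, Matrix.mulVec, dotProduct, Fin.sum_univ_succ] at h0 h1 h2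
  ext i
  fin_cases i <;> simp <;> linarith

theorem W6_inj (t : Fin 3 → ℝ) (h : W6 *ᵥ t = 0) : t = 0 := by
  have h0 := congrFun h 0
  have h1 := congrFun h 2
  have h2 := congrFun h 4
  simp [W6, Matrix.mulVec, dotProduct, Fin.sum_univ_succ] at h0 h1 h2
  ext i
  fin_cases i <;> simp <;> linarith

theorem W5_form (t : Fin 3 → ℝ) :
    3 / 5 * ((W5 *ᵥ t) ⬝ᵥ (W5 *ᵥ t)) ≤ (W5 *ᵥ t) ⬝ᵥ (cycB 5 *ᵥ (W5 *ᵥ t)) := by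
  rw [cycB_five]
  simp [W5, Matrix.mulVec, dotProduct, Fin.sum_univ_succ]
  nlinarith [sq_nonneg (t 0), sq_nonneg (t 1), sq_nonneg (t 2)]

theorem N5_form (t : Fin 2 → ℝ) :
    8 / 5 * ((N5 *ᵥ t) ⬝ᵥ (N5 *ᵥ t)) ≤ (N5 *ᵥ t) ⬝ᵥ ((-cycB 5) *ᵥ (N5 *ᵥ t)) := by
  rw [cycB_five]
  simp [N5, Matrix.mulVec, dotProduct, Fin.sum_univ_succ]
  nlinarith [sq_nonneg (t 0), sq_nonneg (t 1)]

theorem W7_form (t : Fin 3 → ℝ) :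
    1 * ((W7 *ᵥ t) ⬝ᵥ (W7 *ᵥ t)) ≤ (W7 *ᵥ t) ⬝ᵥ (cycB 7 *ᵥ (W7 *ᵥ t)) := by
  rw [cycB_seven]
  simp [W7, Matrix.mulVec, dotProduct, Fin.sum_univ_succ]
  nlinarith [sq_nonneg (t 0), sq_nonneg (t 1), sq_nonneg (t 2)]

theorem W6_form (t : Fin 3 → ℝ) :
    1 * ((W6 *ᵥ t) ⬝ᵥ (W6 *ᵥ t)) ≤ (W6 *ᵥ t) ⬝ᵥ (matB *ᵥ (W6 *ᵥ t)) := by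
  rw [matB_eq]
  simp [W6, Matrix.mulVec, dotProduct, Fin.sum_univ_succ]

end forms

/-- If `G` is non-bipartite with `m` edges and `λ₁ ≥ √(m-1)`, then `G` contains a
triangle, unless `G` is a disjoint union of a 5-cycle and isolated vertices. -/
theorem stmt_1 {V : Type*} [Fintype V] [DecidableEq V] (G : SimpleGraph V)
    [DecidableRel G.Adj] (hnb : ¬ G.Colorable 2)
    (hl : Real.sqrt ((G.edgeFinset.card : ℝ) - 1) ≤ kthEig G 0) :
    ¬ G.CliqueFree 3 ∨
      ∃ f : Fin 5 ↪ V,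
        (∀ i j, G.Adj (f i) (f j) ↔ (SimpleGraph.cycleGraph 5).Adj i j) ∧
        (∀ v, v ∉ Set.range f → ∀ w, ¬ G.Adj v w) := by
  by_cases hcf : G.CliqueFree 3
  swap
  · exact Or.inl hcf
  right
  obtain ⟨L, v, hodd, hL3, hv⟩ := exists_induced_odd_cycle hnb
  have hadj : ∀ i j, i < L → j < L → (G.Adj (v i) (v j) ↔ (j = i + 1 ∨ i = j + 1 ∨
      (i = 0 ∧ j = L - 1) ∨ (j = 0 ∧ i = L - 1))) := by
    intro i j hi hj
    rcases lt_trichotomy i j with h | h | h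
    · rw [(hv i j h hj).2]; omega
    · subst h
      simp only [SimpleGraph.irrefl, false_iff]
      omega
    · rw [G.adj_comm, (hv j i h hi).2]; omega
  have hinj : ∀ i j, i < L → j < L → v i = v j → i = j := by
    intro i j hi hj h
    rcases lt_trichotomy i j with h' | h' | h'
    · exact absurd h (hv i j h' hj).1
    · exact h'
    · exact absurd h.symm (hv j i h' hi).1
  have hLne : L ≠ 3 := by
    rintro rfl
    refine hcf {v 0, v 1, v 2} (SimpleGraph.is3Clique_triple_iff.2 ⟨?_, ?_, ?_⟩)
    · rw [hadj _ _ (by omega) (by omega)]; omega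
    · rw [hadj _ _ (by omega) (by omega)]; omega
    · rw [hadj _ _ (by omega) (by omega)]; omega
  have hL5 : 5 ≤ L := by obtain ⟨k, hk⟩ := hodd; omega
  have hH := adjMatrix_isHermitian G
  obtain ⟨U, hU, hA, hs2, hs3⟩ := spectral_facts _ hH
  rw [trace_sq] at hs2
  rw [trace_cube G hcf] at hs3
  obtain ⟨i0, hi0⟩ : ∃ i0, kthEig G 0 = hH.eigenvalues i0 := by
    have hpos : 0 < Fintype.card V := Fintype.card_pos_iff.2 ⟨v 0⟩
    unfold kthEig
    rw [dif_pos hpos]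
    exact ⟨_, rfl⟩
  rw [hi0] at hl
  set lam := hH.eigenvalues with hlam
  have hm1 : 1 ≤ G.edgeFinset.card := by
    apply Finset.card_pos.2
    refine ⟨s(v 0, v 1), ?_⟩
    rw [SimpleGraph.mem_edgeFinset, SimpleGraph.mem_edgeSet, hadj _ _ (by omega) (by omega)]
    omega
  have hm1' : (1 : ℝ) ≤ G.edgeFinset.card := by exact_mod_cast hm1
  have hsq : Real.sqrt ((G.edgeFinset.card : ℝ) - 1) ^ 2 = (G.edgeFinset.card : ℝ) - 1 :=
    Real.sq_sqrt (by linarith)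
  have hcyc : ∀ i j : Fin L, G.adjMatrix ℝ (v i) (v j) = cycB L i j := by
    intro i j
    simp only [SimpleGraph.adjMatrix_apply, cycB, hadj _ _ i.2 j.2]
  have hfinj : Function.Injective (fun i : Fin L => v i) :=
    fun i j h => Fin.ext (hinj _ _ i.2 j.2 h)
  have hlong : 3 ≤ #{i | 1 ≤ lam i} → False := fun h =>
    numeric_long lam _ _ hs2 hs3 (Real.sqrt_nonneg _) hsq i0 hl h
  by_cases hL7 : L = 7
  · subst hL7
    exact (hlong (count_ge _ U lam hU hA _ hfinj _ hcyc W7 W7_inj 1 W7_form)).elim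
  by_cases hL9 : 9 ≤ L
  · have hpts : ∀ i, pts i ≤ 7 := by decide
    have hptsinj : Function.Injective pts := by decide
    refine (hlong (count_ge _ U lam hU hA (fun i => v (pts i)) ?_ matB ?_
      W6 W6_inj 1 W6_form)).elim
    · intro i j h
      have h1 := hpts i
      have h2 := hpts j
      exact hptsinj (hinj _ _ (by omega) (by omega) h)
    · intro i j
      have h1 := hpts i
      have h2 := hpts j
      have h3 : G.Adj (v (pts i)) (v (pts j)) ↔ pts j = pts i + 1 ∨ pts i = pts j + 1 := by
        rw [hadj _ _ (by omega) (by omega)]; omega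
      simp only [SimpleGraph.adjMatrix_apply, matB, h3]
  have hL : L = 5 := by obtain ⟨k, hk⟩ := hodd; omega
  subst hL
  refine ⟨⟨_, hfinj⟩, ?_, ?_⟩
  · intro i j
    have hdec : ∀ i j : Fin 5, (SimpleGraph.cycleGraph 5).Adj i j ↔ ((j : ℕ) = i + 1 ∨
      (i : ℕ) = j + 1 ∨ ((i : ℕ) = 0 ∧ (j : ℕ) = 5 - 1) ∨ ((j : ℕ) = 0 ∧ (i : ℕ) = 5 - 1)) := by
      decide
    rw [hdec]
    exact hadj _ _ i.2 j.2
  · intro x hx y hxy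
    have hx' : ∀ i, i < 5 → v i ≠ x := fun i hi h => hx ⟨⟨i, hi⟩, h⟩
    have hm6 : 6 ≤ G.edgeFinset.card := by
      let g : Fin 5 → Sym2 V := fun i => s(v i, v ((i + 1 : Fin 5) : ℕ))
      have hg : Function.Injective g := by
        intro i j hij
        have hd : ∀ i j : Fin 5, (i = j ∧ i + 1 = j + 1) ∨ (i = j + 1 ∧ i + 1 = j) → i = j := by
          decide
        apply hd
        rcases Sym2.eq_iff.1 hij with ⟨a, b⟩ | ⟨a, b⟩
        · exact Or.inl ⟨hfinj a, hfinj b⟩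
        · exact Or.inr ⟨hfinj a, hfinj b⟩
      have hnot : s(x, y) ∉ Finset.univ.image g := by
        simp only [Finset.mem_image, Finset.mem_univ, true_and, not_exists]
        intro i hi
        rcases Sym2.eq_iff.1 hi with ⟨a, b⟩ | ⟨a, b⟩
        · exact hx' _ i.2 a
        · exact hx' _ (i + 1 : Fin 5).2 b
      have hc : #(insert s(x, y) (Finset.univ.image g)) = 6 := by
        rw [Finset.card_insert_of_notMem hnot, Finset.card_image_of_injective _ hg]
        simp
      rw [← hc]
      apply Finset.card_le_card
      intro e he
      rw [SimpleGraph.mem_edgeFinset]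
      rcases Finset.mem_insert.1 he with rfl | he
      · exact hxy
      · obtain ⟨i, -, rfl⟩ := Finset.mem_image.1 he
        have hd : ∀ i : Fin 5, (((i + 1 : Fin 5) : ℕ) = i + 1 ∨
          (i : ℕ) = ((i + 1 : Fin 5) : ℕ) + 1 ∨ ((i : ℕ) = 0 ∧ ((i + 1 : Fin 5) : ℕ) = 5 - 1) ∨
          (((i + 1 : Fin 5) : ℕ) = 0 ∧ (i : ℕ) = 5 - 1)) := by decide
        exact (hadj _ _ i.2 (i + 1 : Fin 5).2).2 (hd i)
    have hm6' : (6 : ℝ) ≤ G.edgeFinset.card := by exact_mod_cast hm6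
    refine numeric_short lam _ _ hs2 hs3 (Real.sqrt_nonneg _) hsq (by rw [hsq]; linarith) i0 hl
      (count_ge _ U lam hU hA _ hfinj _ hcyc W5 W5_inj _ W5_form)
      (count_ge (-G.adjMatrix ℝ) U (fun i => -lam i) hU ?_ _ hfinj (-cycB 5) ?_
        N5 N5_inj _ N5_form)
    · have : Matrix.diagonal (fun i => -lam i) = -Matrix.diagonal lam := by
        rw [Matrix.diagonal_neg]
      rw [this, Matrix.mul_neg, Matrix.neg_mul, ← hA]
    · intro i j
      simp only [Matrix.neg_apply, hcyc]
end

section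
/- Let G be a non-bipartite graph of order n. If the largest adjacency eigenvalue of G is at least that of S(K_{⌊(n−1)/2⌋,⌈(n−1)/2⌉}), the graph obtained from the complete bipartite graph K_{⌊(n−1)/2⌋,⌈(n−1)/2⌉} by subdividing one edge, then G contains a triangle unless G is isomorphic to S(K_{⌊(n−1)/2⌋,⌈(n−1)/2⌉}). -/
open Matrix Finset

/-- `SKab a b` : the complete bipartite graph `K_{a,b}` with one edge
(the edge between the first vertex on each side) subdivided by a new vertex. -/
def SKab (a b : ℕ) : SimpleGraph (Fin a ⊕ Fin b ⊕ Unit) :=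
  SimpleGraph.fromRel (fun u v =>
    match u, v with
    | Sum.inl i, Sum.inr (Sum.inl j) => ¬(i.val = 0 ∧ j.val = 0)
    | Sum.inl i, Sum.inr (Sum.inr _) => i.val = 0
    | Sum.inr (Sum.inl j), Sum.inr (Sum.inr _) => j.val = 0
    | _, _ => False)

noncomputable instance (a b : ℕ) : DecidableRel (SKab a b).Adj := Classical.decRel _


theorem kth_ge {V : Type*} [Fintype V] [DecidableEq V] (G : SimpleGraph V) [DecidableRel G.Adj]
    (v : V) : (adjMatrix_isHermitian G).eigenvalues v ≤ kthEig G 0 := by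
  have h : 0 < Fintype.card V := Fintype.card_pos_iff.2 ⟨v⟩
  unfold kthEig
  rw [dif_pos h]
  have h1 := Tuple.monotone_sort (adjEig G)
  have h2 := h1 (a := (Tuple.sort (adjEig G)).symm (Fintype.equivFin V v)) (b := Fin.rev ⟨0, h⟩)
    (by rw [Fin.le_def, Fin.val_rev]; simp; omega)
  simpa [adjEig] using h2

theorem kth_mem {V : Type*} [Fintype V] [DecidableEq V] [Nonempty V] (G : SimpleGraph V)
    [DecidableRel G.Adj] :
    ∃ v : V, (adjMatrix_isHermitian G).eigenvalues v = kthEig G 0 := by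
  have h : 0 < Fintype.card V := Fintype.card_pos
  unfold kthEig
  rw [dif_pos h]
  exact ⟨_, rfl⟩

theorem psd {V : Type*} [Fintype V] [DecidableEq V] (G : SimpleGraph V) [DecidableRel G.Adj] :
    (algebraMap ℝ (Matrix V V ℝ) (kthEig G 0) - G.adjMatrix ℝ).PosSemidef := by
  have hH : (algebraMap ℝ (Matrix V V ℝ) (kthEig G 0) - G.adjMatrix ℝ).IsHermitian := by
    apply IsHermitian.sub _ (adjMatrix_isHermitian G)
    rw [Matrix.algebraMap_eq_diagonal]
    apply isHermitian_diagonal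
  rw [hH.posSemidef_iff_eigenvalues_nonneg]
  intro i
  have h1 := hH.eigenvalues_mem_spectrum_real i
  rw [← spectrum.singleton_sub_eq, (adjMatrix_isHermitian G).spectrum_real_eq_range_eigenvalues] at h1
  obtain ⟨a, ha, b, ⟨v, rfl⟩, hab⟩ := Set.mem_sub.1 h1
  rw [← hab, Set.mem_singleton_iff.1 ha]
  have := kth_ge G v
  simp only [Pi.zero_apply]
  linarith

/-- sum of the values over the neighbours -/
noncomputable def nb {V : Type*} [Fintype V] (G : SimpleGraph V) (x : V → ℝ) (v : V) : ℝ := by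
  classical exact ∑ u, if G.Adj v u then x u else 0

theorem nb_eq {V : Type*} [Fintype V] (G : SimpleGraph V) [DecidableRel G.Adj]
    (x : V → ℝ) (v : V) : nb G x v = ∑ u, if G.Adj v u then x u else 0 := by
  unfold nb
  apply Finset.sum_congr rfl
  intro u _
  congr

theorem nb_mulVec {V : Type*} [Fintype V] (G : SimpleGraph V) [DecidableRel G.Adj]
    (x : V → ℝ) : G.adjMatrix ℝ *ᵥ x = nb G x := by
  funext v
  rw [nb_eq]
  simp [Matrix.mulVec, dotProduct, SimpleGraph.adjMatrix_apply]

theorem E1 {V : Type*} [Fintype V] [DecidableEq V] (G : SimpleGraph V) [DecidableRel G.Adj]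
    (x : V → ℝ) : ∑ v, x v * nb G x v ≤ kthEig G 0 * ∑ v, x v ^ 2 := by
  have h := (psd G).dotProduct_mulVec_nonneg x
  rw [Matrix.sub_mulVec, nb_mulVec, Algebra.algebraMap_eq_smul_one, Matrix.smul_mulVec,
    Matrix.one_mulVec] at h
  simp only [dotProduct, star_trivial, Pi.sub_apply, Pi.smul_apply, smul_eq_mul, mul_sub,
    Finset.sum_sub_distrib] at h
  rw [Finset.mul_sum]
  have : ∑ v, kthEig G 0 * x v ^ 2 = ∑ v, x v * (kthEig G 0 * x v) :=
    Finset.sum_congr rfl fun v _ => by ring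
  linarith

theorem nb_add {V : Type*} [Fintype V] (G : SimpleGraph V) (x y : V → ℝ) (v : V) :
    nb G (fun i => x i + y i) v = nb G x v + nb G y v := by
  classical
  simp only [nb_eq, ← Finset.sum_add_distrib]
  exact Finset.sum_congr rfl fun u _ => by split_ifs <;> simp

theorem nb_smul {V : Type*} [Fintype V] (G : SimpleGraph V) (c : ℝ) (y : V → ℝ) (v : V) :
    nb G (fun i => c * y i) v = c * nb G y v := by
  classical
  simp only [nb_eq, Finset.mul_sum]
  exact Finset.sum_congr rfl fun u _ => by split_ifs <;> simp

theorem nb_nonneg {V : Type*} [Fintype V] (G : SimpleGraph V) {x : V → ℝ} (hx : ∀ v, 0 ≤ x v)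
    (v : V) : 0 ≤ nb G x v := by
  classical
  rw [nb_eq]
  exact Finset.sum_nonneg fun u _ => by split_ifs <;> simp [hx]

theorem nb_symm {V : Type*} [Fintype V] (G : SimpleGraph V) (x y : V → ℝ) :
    ∑ v, x v * nb G y v = ∑ v, y v * nb G x v := by
  classical
  simp only [nb_eq, Finset.mul_sum]
  rw [Finset.sum_comm]
  refine Finset.sum_congr rfl fun u _ => Finset.sum_congr rfl fun v _ => ?_
  simp only [G.adj_comm u v]
  split_ifs <;> ring

/-- if every point satisfies a linear/quadratic inequality, the linear part vanishes -/
theorem lin_zero {a b : ℝ} (hb : 0 ≤ b) (h : ∀ t : ℝ, 2 * t * a ≤ t ^ 2 * b) : a ≤ 0 := by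
  by_contra hc
  push Not at hc
  have h1 := h (a / (b + 1))
  have h3 : 0 < b + 1 := by linarith
  have h2 : 2 * (a / (b+1)) * a * (b+1)^2 ≤ (a / (b+1)) ^ 2 * b * (b+1)^2 :=
    mul_le_mul_of_nonneg_right h1 (by positivity)
  have e1 : 2 * (a / (b+1)) * a * (b+1)^2 = 2 * a^2 * (b+1) := by field_simp
  have e2 : (a / (b+1)) ^ 2 * b * (b+1)^2 = a^2 * b := by field_simp
  rw [e1, e2] at h2
  nlinarith [sq_pos_of_pos hc]

theorem E3 {V : Type*} [Fintype V] [DecidableEq V] (G : SimpleGraph V) [DecidableRel G.Adj]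
    (x : V → ℝ) (h : kthEig G 0 * ∑ v, x v ^ 2 ≤ ∑ v, x v * nb G x v) (v : V) :
    nb G x v = kthEig G 0 * x v := by
  set l := kthEig G 0 with hl
  have key : ∀ y : V → ℝ, ∑ v, y v * (nb G x v - l * x v) ≤ 0 := by
    intro y
    have hb : 0 ≤ l * ∑ v, y v ^ 2 - ∑ v, y v * nb G y v := by linarith [E1 G y]
    apply lin_zero hb
    intro t
    have h1 := E1 G (fun i => x i + t * y i)
    simp only [nb_add, nb_smul] at h1
    have e1 : ∑ v, (x v + t * y v) * (nb G x v + t * nb G y v)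
      = ∑ v, x v * nb G x v + t * ∑ v, y v * nb G x v + t * ∑ v, x v * nb G y v
        + t ^ 2 * ∑ v, y v * nb G y v := by
      simp only [Finset.mul_sum, ← Finset.sum_add_distrib]
      exact Finset.sum_congr rfl fun u _ => by ring
    have e2 : ∑ v, (x v + t * y v) ^ 2
      = ∑ v, x v ^ 2 + 2 * t * ∑ v, y v * x v + t ^ 2 * ∑ v, y v ^ 2 := by
      simp only [Finset.mul_sum, ← Finset.sum_add_distrib]
      exact Finset.sum_congr rfl fun u _ => by ring
    have e3 : ∑ v, y v * (nb G x v - l * x v) = ∑ v, y v * nb G x v - l * ∑ v, y v * x v := by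
      simp only [Finset.mul_sum, ← Finset.sum_sub_distrib]
      exact Finset.sum_congr rfl fun u _ => by ring
    rw [e1, e2, nb_symm G x y] at h1
    rw [e3]
    nlinarith
  have h2 := key (fun v => nb G x v - l * x v)
  have h3 : ∑ v, (nb G x v - l * x v) * (nb G x v - l * x v) = 0 :=
    le_antisymm h2 (Finset.sum_nonneg fun u _ => mul_self_nonneg _)
  have h4 := (Finset.sum_eq_zero_iff_of_nonneg (fun u _ => mul_self_nonneg _)).1 h3 v (mem_univ v)
  have := mul_self_eq_zero.1 h4
  linarith

theorem E2 {V : Type*} [Fintype V] [DecidableEq V] [Nonempty V] (G : SimpleGraph V)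
    [DecidableRel G.Adj] :
    ∃ x : V → ℝ, x ≠ 0 ∧ (∀ v, 0 ≤ x v) ∧ ∀ v, nb G x v = kthEig G 0 * x v := by
  obtain ⟨i, hi⟩ := kth_mem G
  set b := (adjMatrix_isHermitian G).eigenvectorBasis i with hb
  have h1 := (adjMatrix_isHermitian G).mulVec_eigenvectorBasis i
  rw [hi, nb_mulVec, ← hb] at h1
  have hne : b ≠ 0 := (adjMatrix_isHermitian G).eigenvectorBasis.orthonormal.ne_zero i
  have hn : ∀ v, nb G (fun v => b v) v = kthEig G 0 * b v := fun v => by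
    have := congrFun h1 v
    simpa using this
  refine ⟨fun v => |b v|, ?_, fun v => abs_nonneg _, ?_⟩
  · intro h
    apply hne
    ext v
    have := congrFun h v
    simpa using this
  · apply E3
    have e : ∑ v, |b v| ^ 2 = ∑ v, b v ^ 2 := by simp
    rw [e, Finset.mul_sum]
    have : ∀ v, kthEig G 0 * b v ^ 2 ≤ |b v| * nb G (fun v => |b v|) v := by
      intro v
      have : kthEig G 0 * b v ^ 2 = b v * nb G (fun v => b v) v := by rw [hn]; ring
      rw [this, nb_eq, nb_eq, Finset.mul_sum, Finset.mul_sum]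
      refine Finset.sum_le_sum fun u _ => ?_
      split_ifs
      · rw [← abs_mul]; exact le_abs_self _
      · simp
    exact Finset.sum_le_sum fun v _ => this v

theorem kth_le_of_iso {V W : Type*} [Fintype V] [DecidableEq V] [Fintype W] [DecidableEq W]
    (G : SimpleGraph V) [DecidableRel G.Adj] (H : SimpleGraph W) [DecidableRel H.Adj]
    [Nonempty V] (f : G ≃g H) : kthEig G 0 ≤ kthEig H 0 := by
  obtain ⟨x, hx0, hx, hl⟩ := E2 G
  have h := E1 H (fun w => x (f.symm w))
  have e1 : ∀ v, nb H (fun w => x (f.symm w)) (f v) = nb G x v := by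
    intro v
    rw [nb_eq, nb_eq, ← f.toEquiv.sum_comp]
    refine Finset.sum_congr rfl fun u _ => ?_
    have : H.Adj (f v) (f u) ↔ G.Adj v u := f.map_rel_iff
    simp [this]
  rw [← f.toEquiv.sum_comp, ← f.toEquiv.sum_comp (fun w => (x (f.symm w))^2)] at h
  simp only [RelIso.coe_fn_toEquiv, e1, hl, RelIso.symm_apply_apply] at h
  have e2 : ∑ v, x v * (kthEig G 0 * x v) = kthEig G 0 * ∑ v, x v ^ 2 := by
    rw [Finset.mul_sum]; exact Finset.sum_congr rfl fun u _ => by ring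
  rw [e2] at h
  have hp : 0 < ∑ v, x v ^ 2 := by
    obtain ⟨v, hv⟩ := Function.ne_iff.1 hx0
    exact Finset.sum_pos' (fun i _ => sq_nonneg _) ⟨v, mem_univ v, pow_pos (lt_of_le_of_ne (hx v) (fun h => hv h.symm)) 2⟩
  exact le_of_mul_le_mul_right h hp

open Matrix Finset

theorem sk_sum (a b : ℕ) (x : Fin (a+1) ⊕ Fin (b+1) ⊕ Unit → ℝ) :
    ∑ v, x v = x (.inl 0) + ∑ i : Fin a, x (.inl i.succ) + x (.inr (.inl 0))
      + ∑ j : Fin b, x (.inr (.inl j.succ)) + x (.inr (.inr ())) := by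
  rw [Fintype.sum_sum_type, Fintype.sum_sum_type, Fin.sum_univ_succ, Fin.sum_univ_succ]
  simp
  ring

/-- class-constant vectors on `SKab` -/
def skv (a b : ℕ) (p q w α β : ℝ) : Fin (a+1) ⊕ Fin (b+1) ⊕ Unit → ℝ
  | .inl i => if i = 0 then p else α
  | .inr (.inl j) => if j = 0 then q else β
  | .inr (.inr _) => w

theorem nb_skv (a b : ℕ) (p q w α β : ℝ) :
    nb (SKab (a+1) (b+1)) (skv a b p q w α β) =
      skv a b (w + b * β) (w + a * α) (p + q) (q + b * β) (p + a * α) := by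
  classical
  funext v
  rw [nb_eq, sk_sum]
  rcases v with i | j | u
  · refine Fin.cases ?_ (fun i => ?_) i <;> simp [SKab, skv, add_comm]
  · refine Fin.cases ?_ (fun i => ?_) j <;> simp [SKab, skv, add_comm]
  · simp [SKab, skv]

theorem sk_quad (a b : ℕ) (p q w α β : ℝ) :
    2 * (w * (p + q) + p * (b * β) + q * (a * α) + a * α * (b * β)) ≤
      kthEig (SKab (a+1) (b+1)) 0 * (p^2 + q^2 + w^2 + a * α^2 + b * β^2) := by
  have h := E1 (SKab (a+1) (b+1)) (skv a b p q w α β)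
  rw [nb_skv, sk_sum, sk_sum] at h
  simp [skv] at h
  nlinarith

theorem sk_pos (a b : ℕ) : 0 < kthEig (SKab (a+1) (b+1)) 0 := by
  have h := sk_quad a b 1 1 1 0 0
  norm_num at h
  linarith

/-- lower bound for the spectral radius -/
theorem sk_lower (a b : ℕ) :
    (a + 1 : ℝ) * (b + 1) - 2 + 2 / (a + 1) ≤ kthEig (SKab (a+1) (b+1)) 0 ^ 2 := by
  set m := kthEig (SKab (a+1) (b+1)) 0 with hm
  have hp : 0 < m := sk_pos a b
  have h := sk_quad a b m a 1 m (a + 1)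
  rw [← hm] at h
  have ha : (0:ℝ) ≤ a := a.cast_nonneg
  have hb : (0:ℝ) ≤ b := b.cast_nonneg
  have h2 : (a+1 : ℝ) * (b+1) * (a + 1) - 2 * (a+1) + 2 ≤ m ^ 2 * (a + 1) := by
    have : m * ((a+1 : ℝ) * (b+1) * (a + 1) - 2 * (a+1) + 2) ≤ m * (m ^ 2 * (a + 1)) := by
      nlinarith [mul_nonneg ha hb]
    exact le_of_mul_le_mul_left this hp
  have h3 : (0:ℝ) < a + 1 := by linarith
  rw [← mul_le_mul_iff_left₀ h3]
  have : ((a + 1 : ℝ) * (b + 1) - 2 + 2 / (a + 1)) * (a+1) = (a+1 : ℝ) * (b+1) * (a + 1) - 2 * (a+1) + 2 := by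
    field_simp
  linarith

set_option maxHeartbeats 1000000 in
/-- the comparison of `SK` graphs with different part sizes, in terms of the reduced equations.
Here the part sizes are `A+1`, `B+1` and `a+1`, `b+1`. -/
theorem sk_compare (a b : ℕ) (ha : 1 ≤ a) (hab : a ≤ b) (A B ρ p q w S R : ℝ)
    (hsum : A + B = a + b) (hprod : A * B < a * b)
    (hρ : kthEig (SKab (a+1) (b+1)) 0 ≤ ρ)
    (hp : ρ * p = w + R) (hq : ρ * q = w + S) (hw : ρ * w = p + q)
    (hS : ρ * S = A * (q + R)) (hR : ρ * R = B * (p + S)) (hne : S ≠ 0 ∨ R ≠ 0) : False := by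
  have ha1 : (1:ℝ) ≤ a := by exact_mod_cast ha
  have hab1 : (a:ℝ) ≤ b := by exact_mod_cast hab
  have hρ0 : 0 < ρ := lt_of_lt_of_le (sk_pos a b) hρ
  have hlow : (a + 1 : ℝ) * (b + 1) - 2 + 2 / (a + 1) ≤ ρ ^ 2 :=
    (sk_lower a b).trans (pow_le_pow_left₀ (sk_pos a b).le hρ 2)
  have hdiv : 0 < 2 / ((a:ℝ) + 1) := by positivity
  have h3 : 3 ≤ ρ ^ 2 := by
    have : 3 * ((a:ℝ)+1) ≤ ((a + 1 : ℝ) * (b + 1) - 2 + 2 / (a + 1)) * (a+1) := by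
      have : ((a + 1 : ℝ) * (b + 1) - 2 + 2 / (a + 1)) * (a+1) = (a+1 : ℝ) * (b+1) * (a + 1) - 2 * (a+1) + 2 := by
        field_simp
      rw [this]
      nlinarith [mul_nonneg (by linarith : (0:ℝ) ≤ a - 1) (by linarith : (0:ℝ) ≤ b - a), mul_nonneg (mul_nonneg (by linarith : (0:ℝ) ≤ a - 1) (by linarith : (0:ℝ) ≤ b - a)) (by linarith : (0:ℝ) ≤ a), sq_nonneg ((a:ℝ)-1), mul_nonneg (by linarith : (0:ℝ) ≤ a - 1) (sq_nonneg ((a:ℝ)-1)), mul_nonneg (by linarith : (0:ℝ) ≤ a) (by linarith : (0:ℝ) ≤ b - a)]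
    have := le_of_mul_le_mul_right this (by linarith)
    linarith
  have hpos : 0 < ρ^2 - 2 := by linarith
  obtain ⟨g, hg⟩ : ∃ g, g = 1 / (ρ ^2 - 2) := ⟨_, rfl⟩
  have hg1 : g * (ρ^2 - 2) = 1 := by rw [hg]; field_simp
  have hg0 : 0 < g := by rw [hg]; positivity
  have hgle : g ≤ 1 := by rw [hg]; exact (div_le_one hpos).2 (by linarith)
  -- reduced equations
  have hwR : w = g * (R + S) := by
    have : (ρ^2 - 2) * w = R + S := by linear_combination ρ * hw + hp + hq
    rw [← this]; linear_combination (-w) * hg1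
  have h1 : (ρ^2 - A * (1 + g)) * S = A * (ρ + g) * R := by
    have : ρ^2 * S = A * (w + S + ρ * R) := by linear_combination ρ * hS + A * hq
    rw [hwR] at this
    linear_combination this
  have h2 : (ρ^2 - B * (1 + g)) * R = B * (ρ + g) * S := by
    have : ρ^2 * R = B * (w + R + ρ * S) := by linear_combination ρ * hR + B * hp
    rw [hwR] at this
    linear_combination this
  have hdet : (ρ^2 - A * (1 + g)) * (ρ^2 - B * (1 + g)) = A * B * (ρ + g) ^ 2 := by
    rcases hne with h | h
    · apply mul_right_cancel₀ h
      linear_combination (ρ^2 - B * (1 + g)) * h1 + A * (ρ + g) * h2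
    · apply mul_right_cancel₀ h
      linear_combination (ρ^2 - A * (1 + g)) * h2 + B * (ρ + g) * h1
  have hρ1 : 1 < ρ := lt_of_pow_lt_pow_left₀ 2 hρ0.le (by linarith)
  have hlt : (ρ^2 - a * (1 + g)) * (ρ^2 - b * (1 + g)) < a * b * (ρ + g) ^ 2 := by
    have e : (ρ^2 - a * (1 + g)) * (ρ^2 - b * (1 + g)) - a * b * (ρ + g) ^ 2
      = (A * B - a * b) * ((ρ - 1) * (1 + ρ + 2 * g)) := by
      have : (ρ^2 - A * (1 + g)) * (ρ^2 - B * (1 + g)) - A * B * (ρ + g) ^ 2 = 0 := by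
        rw [hdet]; ring
      linear_combination this + (1+g) * ρ^2 * hsum
    have : 0 < (ρ - 1) * (1 + ρ + 2 * g) := mul_pos (by linarith) (by linarith)
    have := mul_neg_of_neg_of_pos (sub_neg.2 hprod) this
    linarith
  have hR' : 0 < ρ^2 - a * (1 + g) := by
    have hag : (a:ℝ) * g ≤ a * 1 := mul_le_mul_of_nonneg_left hgle (by linarith)
    have hq1 : (a + 1 : ℝ) * (a + 1) ≤ (a + 1 : ℝ) * (b + 1) :=
      mul_le_mul_of_nonneg_left (by linarith) (by linarith)
    have hq2 : (1:ℝ) * 1 ≤ a * a := mul_le_mul ha1 ha1 zero_le_one (by linarith)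
    linarith
  -- test vector
  obtain ⟨R', hRd⟩ : ∃ r, r = ρ^2 - a * (1 + g) := ⟨_, rfl⟩
  obtain ⟨S', hSd⟩ : ∃ r, r = a * (ρ + g) := ⟨_, rfl⟩
  obtain ⟨w', hwd⟩ : ∃ r, r = g * (R' + S') := ⟨_, rfl⟩
  have hb0 : (0:ℝ) < b := by linarith
  have h := sk_quad a b ((w' + R') / ρ) ((w' + S') / ρ) w' (ρ + g) (R' / b)
  obtain ⟨p', hpd⟩ : ∃ r, r = (w' + R') / ρ := ⟨_, rfl⟩
  obtain ⟨q', hqd⟩ : ∃ r, r = (w' + S') / ρ := ⟨_, rfl⟩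
  obtain ⟨β, hβ⟩ : ∃ r, r = R' / b := ⟨_, rfl⟩
  rw [← hpd, ← hqd, ← hβ] at h
  have hp' : ρ * p' = w' + R' := by rw [hpd]; field_simp
  have hq' : ρ * q' = w' + S' := by rw [hqd]; field_simp
  have hβ' : b * β = R' := by rw [hβ]; field_simp
  have hβ0 : 0 < β := by rw [hβ]; rw [hRd]; positivity
  have hw' : ρ * w' = p' + q' := by
    have : ρ * (ρ * w') = ρ * (p' + q') := by
      have : (ρ^2 - 2) * w' = R' + S' := by rw [hwd]; linear_combination (R' + S') * hg1
      linear_combination this - hp' - hq'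
    exact mul_left_cancel₀ hρ0.ne' this
  have hα : ρ * (ρ + g) = q' + R' := by
    have : ρ * (ρ * (ρ + g)) = ρ * (q' + R') := by
      have e : w' + S' + ρ * R' = ρ^2 * (ρ + g) := by rw [hwd, hSd, hRd]; ring
      linear_combination -e - hq'
    exact mul_left_cancel₀ hρ0.ne' this
  have hβs : ρ * β < p' + S' := by
    have : b * ρ * (ρ * β) < b * ρ * (p' + S') := by
      have e1 : b * ρ * (ρ * β) = ρ^2 * R' := by rw [← hβ']; ring
      have e2 : b * ρ * (p' + S') = b * ((1 + g) * R' + (ρ + g) * S') := by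
        have : b * ρ * (p' + S') = b * (ρ * p' + ρ * S') := by ring
        rw [this, hp', hwd]; ring
      rw [e1, e2]
      have e3 : b * (ρ + g) * S' = a * b * (ρ + g)^2 := by rw [hSd]; ring
      rw [← hRd] at hlt
      linarith
    exact lt_of_mul_lt_mul_left this (by positivity)
  have hN : 0 ≤ p'^2 + q'^2 + w'^2 + a * (ρ + g)^2 + b * β^2 := by positivity
  have h5 := mul_le_mul_of_nonneg_right hρ hN
  have e : ρ * (p'^2 + q'^2 + w'^2 + a * (ρ + g)^2 + b * β^2) + R' * (p' + S' - ρ * β) =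
     2 * (w' * (p' + q') + p' * (b * β) + q' * (a * (ρ+g)) + a * (ρ+g) * (b * β)) := by
    rw [hβ', ← hSd]
    have : ρ * (b * β^2) = R' * (ρ * β) := by rw [← hβ']; ring
    have e2 : ρ * (a * (ρ+g)^2) = S' * (q' + R') := by rw [← hα, hSd]; ring
    linear_combination this + e2 + p' * hp' + q' * hq' + w' * hw'
  rw [← hRd] at hR'
  linarith [mul_pos hR' (sub_pos.2 hβs)]

open Matrix Finset

theorem sk_three (a b : ℕ) (ha : 1 ≤ a) (hab : a ≤ b) :
    3 ≤ kthEig (SKab (a+1) (b+1)) 0 ^ 2 := by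
  have ha1 : (1:ℝ) ≤ a := by exact_mod_cast ha
  have hab1 : (a:ℝ) ≤ b := by exact_mod_cast hab
  have hlow := sk_lower a b
  have : 3 * ((a:ℝ)+1) ≤ ((a + 1 : ℝ) * (b + 1) - 2 + 2 / (a + 1)) * (a+1) := by
    have : ((a + 1 : ℝ) * (b + 1) - 2 + 2 / (a + 1)) * (a+1) = (a+1 : ℝ) * (b+1) * (a + 1) - 2 * (a+1) + 2 := by
      field_simp
    rw [this]
    have h1 : (a+1:ℝ) * (a+1) * (a+1) ≤ (a+1:ℝ) * (b+1) * (a+1) := by gcongr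
    nlinarith [mul_nonneg (by linarith : (0:ℝ) ≤ a - 1) (sq_nonneg ((a:ℝ)-1)), sq_nonneg ((a:ℝ)-1)]
  have := le_of_mul_le_mul_right this (by linarith)
  linarith

/-- the data of a graph of type `SK` on a vertex set -/
structure SKP {V : Type*} (A B : Finset V) (p q w : V) : Prop where
  disj : ∀ v, v ∈ A → v ∈ B → False
  wA : w ∉ A
  wB : w ∉ B
  cover : ∀ v, v ∈ A ∨ v ∈ B ∨ v = w
  pA : p ∈ A
  qB : q ∈ B

theorem SKP.symm {V : Type*} {A B : Finset V} {p q w : V} (h : SKP A B p q w) :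
    SKP B A q p w :=
  ⟨fun v hb ha => h.disj v ha hb, h.wB, h.wA, fun v => by have := h.cover v; tauto, h.qB, h.pA⟩

/-- the subdivided complete bipartite graph on the parts `A`, `B` with subdivision vertex `w` -/
def SKon {V : Type*} (A B : Finset V) (p q w : V) : SimpleGraph V :=
  SimpleGraph.fromRel (fun u v => (u ∈ A ∧ v ∈ B ∧ ¬ (u = p ∧ v = q)) ∨ (u = w ∧ (v = p ∨ v = q)))

theorem SKon_symm {V : Type*} (A B : Finset V) (p q w : V) : SKon A B p q w = SKon B A q p w := by
  ext u v
  simp only [SKon, SimpleGraph.fromRel_adj]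
  tauto

theorem nb_finset {V : Type*} [Fintype V] [DecidableEq V] {G : SimpleGraph V} (x : V → ℝ) {v : V}
    {s : Finset V} (h : ∀ u, G.Adj v u ↔ u ∈ s) : nb G x v = ∑ u ∈ s, x u := by
  classical
  rw [nb_eq]
  simp only [h]
  simp

section
set_option linter.unusedSectionVars false
variable {V : Type*} [Fintype V] [DecidableEq V] {A B : Finset V} {p q w : V}

theorem adj_p (h : SKP A B p q w) (u : V) :
    (SKon A B p q w).Adj p u ↔ u ∈ insert w (B.erase q) := by
  obtain ⟨h1, h2, h3, h4, h5, h6⟩ := h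
  simp only [SKon, SimpleGraph.fromRel_adj, mem_insert, mem_erase]
  grind

theorem adj_w (h : SKP A B p q w) (u : V) :
    (SKon A B p q w).Adj w u ↔ u ∈ ({p, q} : Finset V) := by
  obtain ⟨h1, h2, h3, h4, h5, h6⟩ := h
  simp only [SKon, SimpleGraph.fromRel_adj, mem_insert, mem_singleton]
  grind

theorem adj_A (h : SKP A B p q w) {v : V} (hv : v ∈ A) (hvp : v ≠ p) (u : V) :
    (SKon A B p q w).Adj v u ↔ u ∈ B := by
  obtain ⟨h1, h2, h3, h4, h5, h6⟩ := h
  simp only [SKon, SimpleGraph.fromRel_adj]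
  grind

theorem nb_p (h : SKP A B p q w) (x : V → ℝ) :
    nb (SKon A B p q w) x p = x w + ∑ u ∈ B.erase q, x u := by
  rw [nb_finset x (adj_p h), sum_insert (by simp [h.wB])]

theorem nb_w (h : SKP A B p q w) (x : V → ℝ) : nb (SKon A B p q w) x w = x p + x q := by
  rw [nb_finset x (adj_w h), sum_pair]
  intro e
  exact h.disj p h.pA (e ▸ h.qB)

theorem nb_A (h : SKP A B p q w) (x : V → ℝ) {v : V} (hv : v ∈ A) (hvp : v ≠ p) :
    nb (SKon A B p q w) x v = x q + ∑ u ∈ B.erase q, x u := by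
  rw [nb_finset x (adj_A h hv hvp), add_sum_erase B x h.qB]

theorem nb_sumA (h : SKP A B p q w) (x : V → ℝ) (ρ : ℝ)
    (he : ∀ v, nb (SKon A B p q w) x v = ρ * x v) :
    ρ * ∑ u ∈ A.erase p, x u = ((#A : ℝ) - 1) * (x q + ∑ u ∈ B.erase q, x u) := by
  rw [Finset.mul_sum]
  have : ∀ u ∈ A.erase p, ρ * x u = x q + ∑ u ∈ B.erase q, x u := by
    intro u hu
    rw [mem_erase] at hu
    rw [← he, nb_A h x hu.2 hu.1]
  rw [sum_congr rfl this, sum_const, nsmul_eq_mul, card_erase_of_mem h.pA,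
    Nat.cast_sub (card_pos.2 ⟨p, h.pA⟩)]
  simp

/-- an unbalanced `SK` graph cannot have spectral radius as large as the balanced one -/
theorem sk_unbal (h : SKP A B p q w) (a b : ℕ) (ha : 1 ≤ a) (hab : a ≤ b)
    (hsum : #A + #B = a + b + 2) (hprod : #A * #B < (a + 1) * (b + 1))
    (x : V → ℝ) (hx0 : x ≠ 0) (hx : ∀ v, 0 ≤ x v) (ρ : ℝ)
    (he : ∀ v, nb (SKon A B p q w) x v = ρ * x v)
    (hρ : kthEig (SKab (a+1) (b+1)) 0 ≤ ρ) : False := by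
  have hs : (#A + #B : ℝ) = a + b + 2 := by exact_mod_cast hsum
  have hpr : (#A * #B : ℝ) < (a + 1) * (b + 1) := by exact_mod_cast hprod
  have hρ0 : 0 < ρ := lt_of_lt_of_le (sk_pos a b) hρ
  have e1 := nb_p h x
  have e2 := nb_p h.symm x
  have e3 := nb_w h x
  have e4 := nb_sumA h x ρ he
  have he' : ∀ v, nb (SKon B A q p w) x v = ρ * x v := by rw [SKon_symm]; exact he
  have e5 := nb_sumA h.symm x ρ he'
  rw [he] at e1 e3
  rw [he'] at e2
  refine sk_compare a b ha hab (#A - 1) (#B - 1) ρ (x p) (x q) (x w) _ _ (by linarith)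
    (by nlinarith) hρ e1 e2 e3 e4 e5 ?_
  by_contra hc
  push Not at hc
  obtain ⟨hS, hR⟩ := hc
  have h3 : 3 ≤ ρ ^ 2 := (sk_three a b ha hab).trans (pow_le_pow_left₀ (sk_pos a b).le hρ 2)
  rw [hR] at e1
  rw [hS] at e2
  have hw0 : x w = 0 := by
    have : (ρ^2 - 2) * x w = 0 := by linear_combination ρ * e3 + e1 + e2
    rcases mul_eq_zero.1 this with h' | h'
    · linarith
    · exact h'
  rw [hw0] at e1 e2
  have hp0 : x p = 0 := by
    have : ρ * x p = 0 := by linarith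
    exact (mul_eq_zero.1 this).resolve_left hρ0.ne'
  have hq0 : x q = 0 := by
    have : ρ * x q = 0 := by linarith
    exact (mul_eq_zero.1 this).resolve_left hρ0.ne'
  rw [sum_eq_zero_iff_of_nonneg (fun _ _ => hx _)] at hS hR
  apply hx0
  funext v
  by_cases hvp : v = p
  · simp [hvp, hp0]
  by_cases hvq : v = q
  · simp [hvq, hq0]
  rcases h.cover v with hv | hv | hv
  · exact hS v (by simp [hv, hvp])
  · exact hR v (by simp [hv, hvq])
  · simp [hv, hw0]

theorem enum_exists (A : Finset V) (p : V) (hp : p ∈ A) (k : ℕ) (hk : #A = k + 1) :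
    ∃ e : Fin (k+1) → V, Function.Injective e ∧ (∀ v, v ∈ A ↔ ∃ i, e i = v) ∧ e 0 = p := by
  let e0 := A.equivFinOfCardEq hk
  refine ⟨fun i => e0.symm (Equiv.swap 0 (e0 ⟨p, hp⟩) i), ?_, ?_, ?_⟩
  · intro i j hij
    simpa using hij
  · intro v
    constructor
    · intro hv
      exact ⟨Equiv.swap 0 (e0 ⟨p, hp⟩) (e0 ⟨v, hv⟩), by simp⟩
    · rintro ⟨i, rfl⟩
      exact (e0.symm _).2
  · simp

theorem sk_iso (h : SKP A B p q w) (a b : ℕ) (hA : #A = a + 1) (hB : #B = b + 1) :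
    Nonempty (SKon A B p q w ≃g SKab (a+1) (b+1)) := by
  obtain ⟨eA, iA, mA, zA⟩ := enum_exists A p h.pA a hA
  obtain ⟨eB, iB, mB, zB⟩ := enum_exists B q h.qB b hB
  have hA' : ∀ i, eA i ∈ A := fun i => (mA _).2 ⟨i, rfl⟩
  have hB' : ∀ i, eB i ∈ B := fun i => (mB _).2 ⟨i, rfl⟩
  have pA : ∀ i, eA i = p ↔ i = 0 := fun i => by rw [← zA]; exact iA.eq_iff
  have qB : ∀ i, eB i = q ↔ i = 0 := fun i => by rw [← zB]; exact iB.eq_iff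
  have nAB : ∀ i, eA i ∉ B := fun i hi => h.disj _ (hA' i) hi
  have nBA : ∀ i, eB i ∉ A := fun i hi => h.disj _ hi (hB' i)
  have nAB' : ∀ i j, eA i ≠ eB j := fun i j hij => nAB i (hij ▸ hB' j)
  have nBA' : ∀ i j, eB i ≠ eA j := fun i j hij => nAB' j i hij.symm
  have nAw : ∀ i, eA i ≠ w := fun i hi => h.wA (hi ▸ hA' i)
  have nBw : ∀ i, eB i ≠ w := fun i hi => h.wB (hi ▸ hB' i)
  have nAw' : ∀ i, w ≠ eA i := fun i hi => nAw i hi.symm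
  have nBw' : ∀ i, w ≠ eB i := fun i hi => nBw i hi.symm
  have nAq : ∀ i, eA i ≠ q := fun i => zB ▸ nAB' i 0
  have nBp : ∀ i, eB i ≠ p := fun i => zA ▸ nBA' i 0
  have hwp : w ≠ p := fun e => h.wA (e ▸ h.pA)
  have hwq : w ≠ q := fun e => h.wB (e ▸ h.qB)
  let f : Fin (a+1) ⊕ Fin (b+1) ⊕ Unit → V := Sum.elim eA (Sum.elim eB fun _ => w)
  have hf : Function.Bijective f := by
    constructor
    · rintro (i | i | i) (j | j | j) hij
      · exact congrArg _ (iA hij)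
      · exact absurd hij (nAB' i j)
      · exact absurd hij (nAw i)
      · exact absurd hij (nBA' i j)
      · exact congrArg _ (congrArg _ (iB hij))
      · exact absurd hij (nBw i)
      · exact absurd hij (nAw' j)
      · exact absurd hij (nBw' j)
      · rfl
    · intro v
      rcases h.cover v with hv | hv | hv
      · obtain ⟨i, hi⟩ := (mA v).1 hv
        exact ⟨.inl i, hi⟩
      · obtain ⟨i, hi⟩ := (mB v).1 hv
        exact ⟨.inr (.inl i), hi⟩
      · exact ⟨.inr (.inr ()), hv.symm⟩
  have hiso : ∀ u v, (SKon A B p q w).Adj (f u) (f v) ↔ (SKab (a+1) (b+1)).Adj u v := by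
    have hwA := h.wA
    have hwB := h.wB
    rintro (i | i | i) (j | j | j) <;>
      simp [f, SKon, SKab, hA', hB', pA, qB, nAB, nBA, nAB', nBA', nAw, nBw, nAw', nBw', nAq, nBp,
        hwA, hwB, hwp, hwq, Fin.val_eq_zero_iff]
  exact ⟨(⟨Equiv.ofBijective f hf, fun {u v} => hiso u v⟩ : SKab (a+1) (b+1) ≃g SKon A B p q w).symm⟩

end

open Matrix Finset

section
set_option linter.unusedSectionVars false
variable {V : Type*} [Fintype V] [DecidableEq V] {A B : Finset V} {p q w : V}

/-- rotating the superfluous edges at `w` to `p` does not decrease the quadratic form -/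
theorem rot_quad (G : SimpleGraph V) (h : SKP A B p q w)
    (htf : ∀ a b c, G.Adj a b → G.Adj b c → G.Adj a c → False)
    (hwp : G.Adj w p) (hwq : G.Adj w q)
    (hAA : ∀ u ∈ A, ∀ v ∈ A, ¬ G.Adj u v) (hBB : ∀ u ∈ B, ∀ v ∈ B, ¬ G.Adj u v)
    (honly : ∀ u ∈ A, G.Adj w u → u = p)
    (x : V → ℝ) (hx : ∀ v, 0 ≤ x v) (hle : x w ≤ x p) :
    ∑ v, x v * nb G x v ≤ ∑ v, x v * nb (SKon A B p q w) x v := by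
  classical
  let M : V → ℝ := fun m => if G.Adj w m ∧ m ∈ B ∧ m ≠ q then 1 else 0
  let P : V → ℝ := fun m => if m = p then 1 else 0
  let W : V → ℝ := fun m => if m = w then 1 else 0
  have key : ∀ u v, (if G.Adj u v then (1:ℝ) else 0) + (P u * M v + P v * M u - W u * M v - W v * M u)
      ≤ if (SKon A B p q w).Adj u v then 1 else 0 := by
    have hwp' := hwp.symm
    have hwq' := hwq.symm
    have hirr : ∀ v, ¬ G.Adj v v := fun v => G.irrefl
    have hsy : ∀ u v, G.Adj u v → G.Adj v u := fun u v h => h.symm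
    obtain ⟨h1, h2, h3, h4, h5, h6⟩ := h
    have hpB : p ∉ B := fun hh => h1 p h5 hh
    have hqA : q ∉ A := fun hh => h1 q hh h6
    have hnpw : p ≠ w := fun e => h2 (e ▸ h5)
    have hnqw : q ≠ w := fun e => h3 (e ▸ h6)
    have hpq : ¬ G.Adj p q := fun e => htf w p q hwp e hwq
    intro u v
    have hM0 : ∀ m, m ∉ B → M m = 0 := fun m hm => by simp [M, hm]
    have hP0 : ∀ m, m ≠ p → P m = 0 := fun m hm => by simp [P, hm]
    have hW0 : ∀ m, m ≠ w → W m = 0 := fun m hm => by simp [W, hm]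
    have hWw : W w = 1 := by simp [W]
    have hPw : P w = 0 := hP0 w hnpw.symm
    have hMw : M w = 0 := hM0 w h3
    have hnn : ∀ u v, (0:ℝ) ≤ if (SKon A B p q w).Adj u v then 1 else 0 := fun u v => by
      split_ifs <;> norm_num
    have caseAB : ∀ u ∈ A, ∀ v ∈ B, (if G.Adj u v then (1:ℝ) else 0) + P u * M v
        ≤ if (SKon A B p q w).Adj u v then 1 else 0 := by
      intro u hu v hv
      have hne : u ≠ v := fun e => h1 u hu (e ▸ hv)
      by_cases hpq' : u = p ∧ v = q
      · obtain ⟨rfl, rfl⟩ := hpq'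
        have hMq : M v = 0 := by simp [M]
        rw [if_neg hpq, hMq]
        simpa using hnn u v
      · have hS : (SKon A B p q w).Adj u v := by
          simp only [SKon, SimpleGraph.fromRel_adj]
          exact ⟨hne, Or.inl (Or.inl ⟨hu, hv, hpq'⟩)⟩
        rw [if_pos hS]
        by_cases hup : u = p
        · by_cases hwv : G.Adj w v
          · have : ¬ G.Adj u v := fun e => htf w u v (hup ▸ hwp) e hwv
            rw [if_neg this]
            simp only [P, M]
            split_ifs <;> norm_num
          · have : M v = 0 := by simp [M, hwv]
            rw [this]
            split_ifs <;> norm_num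
        · rw [hP0 u hup]
          split_ifs <;> norm_num
    have caseAw : ∀ u ∈ A, (if G.Adj u w then (1:ℝ) else 0)
        ≤ if (SKon A B p q w).Adj u w then 1 else 0 := by
      intro u hu
      by_cases hG : G.Adj u w
      · have hup := honly u hu hG.symm
        have hS : (SKon A B p q w).Adj u w := by
          simp only [SKon, SimpleGraph.fromRel_adj]
          exact ⟨hG.ne, Or.inr (Or.inr ⟨trivial, Or.inl hup⟩)⟩
        rw [if_pos hG, if_pos hS]
      · rw [if_neg hG]; exact hnn u w
    have caseBw : ∀ u ∈ B, (if G.Adj u w then (1:ℝ) else 0) - M u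
        ≤ if (SKon A B p q w).Adj u w then 1 else 0 := by
      intro u hu
      by_cases hG : G.Adj u w
      · by_cases huq : u = q
        · have hS : (SKon A B p q w).Adj u w := by
            simp only [SKon, SimpleGraph.fromRel_adj]
            exact ⟨hG.ne, Or.inr (Or.inr ⟨trivial, Or.inr huq⟩)⟩
          have hMq : M u = 0 := by simp [M, huq]
          rw [if_pos hG, if_pos hS, hMq, sub_zero]
        · have : M u = 1 := by simp [M, hG.symm, hu, huq]
          rw [if_pos hG, this, sub_self]
          exact hnn u w
      · have : M u = 0 := by simp [M, show ¬ G.Adj w u from fun e => hG e.symm]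
        rw [if_neg hG, this, sub_zero]
        exact hnn u w
    have cA : ∀ u ∈ A, M u = 0 ∧ W u = 0 := fun u hu =>
      ⟨hM0 u fun hh => h1 u hu hh, hW0 u fun e => h2 (e ▸ hu)⟩
    have cB : ∀ u ∈ B, P u = 0 ∧ W u = 0 := fun u hu =>
      ⟨hP0 u fun e => hpB (e ▸ hu), hW0 u fun e => h3 (e ▸ hu)⟩
    rcases h4 u with hu | hu | hu <;> rcases h4 v with hv | hv | hv
    · rw [(cA u hu).1, (cA v hv).1, if_neg (hAA u hu v hv)]
      simpa using hnn u v
    · have := caseAB u hu v hv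
      rw [(cA u hu).1, (cA u hu).2, (cB v hv).1, (cB v hv).2]
      linarith
    · have := caseAw u hu
      rw [hv, (cA u hu).1, (cA u hu).2, hMw]
      linarith
    · have := caseAB v hv u hu
      rw [G.adj_comm, (SKon A B p q w).adj_comm] at this
      rw [(cA v hv).1, (cA v hv).2, (cB u hu).1, (cB u hu).2]
      linarith
    · rw [(cB u hu).1, (cB v hv).1, (cB u hu).2, (cB v hv).2, if_neg (hBB u hu v hv)]
      simpa using hnn u v
    · have := caseBw u hu
      rw [hv, (cB u hu).1, (cB u hu).2, hPw, hWw]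
      linarith
    · have := caseAw v hv
      rw [G.adj_comm, (SKon A B p q w).adj_comm] at this
      rw [hu, (cA v hv).1, (cA v hv).2, hMw]
      linarith
    · have := caseBw v hv
      rw [G.adj_comm, (SKon A B p q w).adj_comm] at this
      rw [hu, (cB v hv).1, (cB v hv).2, hPw, hWw]
      linarith
    · rw [hu, hv, hMw]
      simp
  have e1 : ∀ (H : SimpleGraph V), ∑ v, x v * nb H x v =
      ∑ u, ∑ v, x u * x v * (if H.Adj u v then (1:ℝ) else 0) := by
    intro H
    refine sum_congr rfl fun u _ => ?_
    rw [nb_eq, mul_sum]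
    refine sum_congr rfl fun v _ => ?_
    split_ifs <;> ring
  have e2 : 0 ≤ ∑ u, ∑ v, x u * x v * (P u * M v + P v * M u - W u * M v - W v * M u) := by
    have : ∑ u, ∑ v, x u * x v * (P u * M v + P v * M u - W u * M v - W v * M u)
      = 2 * (∑ u, x u * P u - ∑ u, x u * W u) * ∑ v, x v * M v := by
      have e : ∀ f g : V → ℝ, (∑ u, f u) * ∑ v, g v = ∑ u, ∑ v, f u * g v :=
        fun f g => sum_mul_sum _ _ _ _
      have e' : ∀ f g : V → ℝ, (∑ u, f u) * ∑ v, g v = ∑ u, ∑ v, f v * g u := fun f g => by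
        rw [e, sum_comm]
      have : 2 * (∑ u, x u * P u - ∑ u, x u * W u) * ∑ v, x v * M v =
        (∑ u, x u * P u) * (∑ v, x v * M v) + (∑ u, x u * P u) * (∑ v, x v * M v) -
        (∑ u, x u * W u) * (∑ v, x v * M v) - (∑ u, x u * W u) * (∑ v, x v * M v) := by ring
      rw [this]
      nth_rewrite 1 [e]
      nth_rewrite 1 [e']
      nth_rewrite 1 [e]
      nth_rewrite 1 [e']
      simp only [← sum_add_distrib, ← sum_sub_distrib]
      refine sum_congr rfl fun u _ => sum_congr rfl fun v _ => ?_
      ring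
    rw [this]
    have hP : ∑ u, x u * P u = x p := by simp [P]
    have hW : ∑ u, x u * W u = x w := by simp [W]
    rw [hP, hW]
    refine mul_nonneg (by linarith) (sum_nonneg fun v _ => mul_nonneg (hx v) ?_)
    simp only [M]
    split_ifs <;> norm_num
  rw [e1, e1]
  have e3 : ∑ u, ∑ v, x u * x v * (if G.Adj u v then (1:ℝ) else 0) +
      ∑ u, ∑ v, x u * x v * (P u * M v + P v * M u - W u * M v - W v * M u) ≤
      ∑ u, ∑ v, x u * x v * (if (SKon A B p q w).Adj u v then (1:ℝ) else 0) := by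
    simp only [← sum_add_distrib]
    refine sum_le_sum fun u _ => sum_le_sum fun v _ => ?_
    rw [← mul_add]
    exact mul_le_mul_of_nonneg_left (key u v) (mul_nonneg (hx u) (hx v))
  linarith

theorem pos_of_eig (h : SKP A B p q w) (x : V → ℝ) (hx : ∀ v, 0 ≤ x v) (hx0 : x ≠ 0) (ρ : ℝ)
    (he : ∀ v, nb (SKon A B p q w) x v = ρ * x v) (v : V) : 0 < x v := by
  classical
  have prop : ∀ u v, (SKon A B p q w).Adj u v → x u = 0 → x v = 0 := by
    intro u v huv hu
    have h1 := he u
    rw [hu, mul_zero, nb_eq, sum_eq_zero_iff_of_nonneg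
      (fun i _ => by split_ifs; exacts [hx i, le_rfl])] at h1
    simpa [huv] using h1 v (mem_univ v)
  have awp := (adj_w h p).2 (by simp)
  have awq := (adj_w h q).2 (by simp)
  have aA : ∀ v ∈ A, v ≠ p → (SKon A B p q w).Adj v q := fun v hv hvp => (adj_A h hv hvp q).2 h.qB
  have aB : ∀ v ∈ B, v ≠ q → (SKon A B p q w).Adj v p := fun v hv hvp => by
    rw [SKon_symm]; exact (adj_A h.symm hv hvp p).2 h.pA
  have toW : ∀ v, x v = 0 → x w = 0 := by
    intro v hv
    by_cases hvp : v = p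
    · exact prop p w awp.symm (hvp ▸ hv)
    by_cases hvq : v = q
    · exact prop q w awq.symm (hvq ▸ hv)
    rcases h.cover v with h' | h' | h'
    · exact prop q w awq.symm (prop v q (aA v h' hvp) hv)
    · exact prop p w awp.symm (prop v p (aB v h' hvq) hv)
    · exact h' ▸ hv
  rcases (hx v).lt_or_eq with h1 | h1
  · exact h1
  exfalso
  have hw := toW v h1.symm
  have hp := prop w p awp hw
  have hq := prop w q awq hw
  apply hx0
  funext v
  by_cases hvp : v = p
  · simp [hvp, hp]
  by_cases hvq : v = q
  · simp [hvq, hq]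
  rcases h.cover v with h' | h' | h'
  · exact prop q v (aA v h' hvp).symm hq
  · exact prop p v (aB v h' hvq).symm hp
  · simp [h', hw]

theorem adj_eq_of_nb (G H : SimpleGraph V) (x : V → ℝ) (hx : ∀ v, 0 < x v) (v : V)
    (hsub : ∀ u, G.Adj v u → H.Adj v u) (he : nb G x v = nb H x v) (u : V) (hu : H.Adj v u) :
    G.Adj v u := by
  classical
  rw [nb_eq, nb_eq] at he
  have := (sum_eq_sum_iff_of_le (s := univ) (f := fun u => if G.Adj v u then x u else 0)
    (g := fun u => if H.Adj v u then x u else 0) (by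
      intro i _
      by_cases h1 : G.Adj v i
      · simp [h1, hsub i h1]
      · simp only [h1, if_false]; split_ifs; exacts [(hx i).le, le_rfl])).1 he u (mem_univ u)
  by_contra hc
  simp [hc, hu] at this
  exact (hx u).ne this

theorem main_rot (G : SimpleGraph V) [DecidableRel G.Adj] (h : SKP A B p q w)
    (htf : ∀ a b c, G.Adj a b → G.Adj b c → G.Adj a c → False)
    (hwp : G.Adj w p) (hwq : G.Adj w q)
    (hAA : ∀ u ∈ A, ∀ v ∈ A, ¬ G.Adj u v) (hBB : ∀ u ∈ B, ∀ v ∈ B, ¬ G.Adj u v)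
    (honly : ∀ u ∈ A, G.Adj w u → u = p)
    (x : V → ℝ) (hx : ∀ v, 0 ≤ x v) (hx0 : x ≠ 0) (hle : x w ≤ x p)
    (he : ∀ v, nb G x v = kthEig G 0 * x v)
    (a b : ℕ) (ha : 1 ≤ a) (hab : a ≤ b) (hsum : #A + #B = a + b + 2)
    (hprod : #A * #B ≤ (a + 1) * (b + 1))
    (hl : kthEig (SKab (a+1) (b+1)) 0 ≤ kthEig G 0) :
    Nonempty (G ≃g SKab (a+1) (b+1)) := by
  classical
  have : Nonempty V := ⟨w⟩
  have hN : 0 < ∑ v, x v ^ 2 := by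
    obtain ⟨v, hv⟩ := Function.ne_iff.1 hx0
    exact Finset.sum_pos' (fun i _ => sq_nonneg _)
      ⟨v, mem_univ v, pow_pos (lt_of_le_of_ne (hx v) (fun h => hv h.symm)) 2⟩
  have hquad := rot_quad G h htf hwp hwq hAA hBB honly x hx hle
  have e1 : ∑ v, x v * nb G x v = kthEig G 0 * ∑ v, x v ^ 2 := by
    rw [Finset.mul_sum]; exact Finset.sum_congr rfl fun u _ => by rw [he]; ring
  have hS := E1 (SKon A B p q w) x
  have hGS : kthEig G 0 ≤ kthEig (SKon A B p q w) 0 :=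
    le_of_mul_le_mul_right (by linarith) hN
  rcases hprod.lt_or_eq with hlt | heq
  · exfalso
    obtain ⟨y, hy0, hy, hye⟩ := E2 (SKon A B p q w)
    exact sk_unbal h a b ha hab hsum hlt y hy0 hy _ hye (hl.trans hGS)
  · have hiso : Nonempty (SKon A B p q w ≃g SKab (a+1) (b+1)) := by
      have : (#A = a + 1 ∧ #B = b + 1) ∨ (#A = b + 1 ∧ #B = a + 1) := by
        have h1 : ((#A : ℤ) - (a + 1)) * (#A - (b+1)) = 0 := by
          have h1 : (#A : ℤ) + #B = a + b + 2 := by exact_mod_cast hsum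
          have h2 : (#A : ℤ) * #B = (a+1) * (b+1) := by exact_mod_cast heq
          linear_combination (#A:ℤ) * h1 - h2
        rcases mul_eq_zero.1 h1 with h1 | h1
        · left; omega
        · right; omega
      rcases this with ⟨h1, h2⟩ | ⟨h1, h2⟩
      · exact sk_iso h a b h1 h2
      · rw [SKon_symm]; exact sk_iso h.symm a b h2 h1
    obtain ⟨φ⟩ := hiso
    have hSl := kth_le_of_iso _ _ φ
    have hEq : kthEig (SKon A B p q w) 0 = kthEig G 0 := le_antisymm (hSl.trans hl) hGS
    have heS := E3 (SKon A B p q w) x (by rw [hEq]; linarith)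
    have hxp := pos_of_eig h x hx hx0 _ heS
    have hnb : ∀ v, nb G x v = nb (SKon A B p q w) x v := fun v => by rw [he, heS, hEq]
    have hw : ∀ u, G.Adj w u → (SKon A B p q w).Adj w u := by
      apply adj_eq_of_nb (SKon A B p q w) G x hxp w _ (hnb w).symm
      intro u hu
      rw [adj_w h] at hu
      simp only [mem_insert, mem_singleton] at hu
      rcases hu with rfl | rfl <;> assumption
    have hle' : ∀ u v, G.Adj u v → (SKon A B p q w).Adj u v := by
      intro u v huv
      by_cases hu : u = w
      · subst hu; exact hw v huv
      by_cases hv : v = w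
      · subst hv; exact (hw u huv.symm).symm
      have hpq : ¬ G.Adj p q := fun e => htf w p q hwp e hwq
      have hpq' : ¬ G.Adj q p := fun e => hpq e.symm
      have hne := huv.ne
      simp only [SKon, SimpleGraph.fromRel_adj]
      have h1 := h.cover u
      have h2 := h.cover v
      grind
    have : G = SKon A B p q w := by
      ext u v
      exact ⟨hle' u v, adj_eq_of_nb G _ x hxp u (hle' u) (hnb u) v⟩
    rw [this]
    exact ⟨φ⟩
end

open Matrix Finset

section
set_option linter.unusedSectionVars false
variable {V : Type*} [Fintype V] [DecidableEq V]

theorem color_of (G : SimpleGraph V) (C : V → Prop) (h1 : ∀ u v, G.Adj u v → C u → C v → False)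
    (h2 : ∀ u v, G.Adj u v → ¬ C u → ¬ C v → False) : G.Colorable 2 := by
  classical
  refine ⟨SimpleGraph.Coloring.mk (fun v => if C v then (0 : Fin 2) else 1) ?_⟩
  intro u v huv
  have a1 := h1 u v huv
  have a2 := h2 u v huv
  by_cases hu : C u <;> by_cases hv : C v <;> simp_all

theorem amgm (s t a b : ℕ) (hab : b = a ∨ b = a + 1) (h : s + t = a + b) : s * t ≤ a * b := by
  have h1 : (0:ℤ) ≤ ((s:ℤ) - a) * (s - b) := by
    rcases le_or_gt s a with h' | h'
    · have e1 : (s:ℤ) - a ≤ 0 := by omega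
      have e2 : (s:ℤ) - b ≤ 0 := by omega
      exact mul_nonneg_of_nonpos_of_nonpos e1 e2
    · exact mul_nonneg (by omega) (by omega)
  have h2 : (s:ℤ) + t = a + b := by exact_mod_cast h
  have h3 : (s:ℤ) * t ≤ a * b := by
    have : (t:ℤ) = a + b - s := by linarith
    rw [this]; linarith
  exact_mod_cast h3

theorem cost (G : SimpleGraph V) [DecidableRel G.Adj] (u : V) (A B : Finset V)
    (hA : ∀ v, v ∈ A ↔ G.Adj u v) (hB : ∀ v, v ∈ B ↔ v ∉ A)
    (hAA : ∀ v ∈ A, ∀ w ∈ A, ¬ G.Adj v w) (x : V → ℝ) (l : ℝ) (he : ∀ v, nb G x v = l * x v)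
    (hmax : ∀ v, x v ≤ x u) (hpos : 0 < x u) :
    l ^ 2 ≤ ((∑ z ∈ B, #(A.filter (G.Adj z)) : ℕ) : ℝ) := by
  have h1 : l * x u = ∑ v ∈ A, x v := by
    rw [← he]; exact nb_finset x (fun v => (hA v).symm)
  have h2 : l ^ 2 * x u = ∑ z, (#(A.filter (G.Adj z)) : ℝ) * x z := by
    have : l ^ 2 * x u = ∑ v ∈ A, ∑ z, if G.Adj v z then x z else 0 := by
      have : l ^ 2 * x u = l * (l * x u) := by ring
      rw [this, h1, mul_sum]
      refine sum_congr rfl fun v _ => ?_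
      rw [← he, nb_eq]
    rw [this, sum_comm]
    refine sum_congr rfl fun z _ => ?_
    rw [← sum_filter, sum_const, nsmul_eq_mul]
    simp only [G.adj_comm z]
  have h3 : ∑ z, (#(A.filter (G.Adj z)) : ℝ) * x z = ∑ z ∈ B, (#(A.filter (G.Adj z)) : ℝ) * x z := by
    symm
    apply sum_subset (subset_univ B)
    intro z _ hz
    have hzA : z ∈ A := by by_contra hc; exact hz ((hB z).2 hc)
    have : A.filter (G.Adj z) = ∅ := filter_eq_empty_iff.2 fun w hw => hAA z hzA w hw
    simp [this]
  have h4 : l ^ 2 * x u ≤ (∑ z ∈ B, (#(A.filter (G.Adj z)) : ℝ)) * x u := by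
    rw [h2, h3, sum_mul]
    exact sum_le_sum fun z _ => mul_le_mul_of_nonneg_left (hmax z) (Nat.cast_nonneg _)
  have h5 := le_of_mul_le_mul_right h4 hpos
  push_cast
  exact h5

theorem deg_pair (G : SimpleGraph V) [DecidableRel G.Adj]
    (htf : ∀ a b c, G.Adj a b → G.Adj b c → G.Adj a c → False) (A : Finset V) {y z : V}
    (h : G.Adj y z) : #(A.filter (G.Adj y)) + #(A.filter (G.Adj z)) ≤ #A := by
  rw [← card_union_of_disjoint]
  · exact card_le_card (union_subset (filter_subset _ _) (filter_subset _ _))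
  · rw [disjoint_left]
    intro v h1 h2
    rw [mem_filter] at h1 h2
    exact htf y z v h h2.2 h1.2

theorem two_match (G : SimpleGraph V) [DecidableRel G.Adj]
    (htf : ∀ a b c, G.Adj a b → G.Adj b c → G.Adj a c → False) (A B : Finset V) {y z y' z' : V}
    (h : G.Adj y z) (h' : G.Adj y' z') (hy : y ∈ B) (hz : z ∈ B) (hy' : y' ∈ B) (hz' : z' ∈ B)
    (h1 : y ≠ y') (h2 : y ≠ z') (h3 : z ≠ y') (h4 : z ≠ z') :
    2 ≤ #B ∧ ∑ v ∈ B, #(A.filter (G.Adj v)) ≤ #A * (#B - 2) := by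
  have hsub : ({y, z, y', z'} : Finset V) ⊆ B := by
    intro v; simp only [mem_insert, mem_singleton]; rintro (rfl | rfl | rfl | rfl) <;> assumption
  have hc : #({y, z, y', z'} : Finset V) = 4 := by
    rw [card_insert_of_notMem, card_insert_of_notMem, card_pair h'.ne] <;> simp_all [h.ne]
  have hcard := card_le_card hsub
  rw [hc] at hcard
  refine ⟨by omega, ?_⟩
  rw [← sum_sdiff hsub]
  have e1 : ∑ v ∈ ({y, z, y', z'} : Finset V), #(A.filter (G.Adj v)) ≤ 2 * #A := by
    rw [sum_insert (by simp_all [h.ne]), sum_insert (by simp_all), sum_pair h'.ne]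
    have := deg_pair G htf A h
    have := deg_pair G htf A h'
    omega
  have e2 : ∑ v ∈ B \ {y, z, y', z'}, #(A.filter (G.Adj v)) ≤ (#B - 4) * #A := by
    rw [← hc, ← card_sdiff_of_subset hsub]
    exact sum_le_card_nsmul _ _ _ fun v _ => card_filter_le _ _
  have e3 : #A * (#B - 2) = (#B - 4) * #A + 2 * #A := by
    have : #B - 2 = (#B - 4) + 2 := by omega
    rw [this]; ring
  omega

theorem star_bound (G : SimpleGraph V) [DecidableRel G.Adj]
    (htf : ∀ a b c, G.Adj a b → G.Adj b c → G.Adj a c → False) (A B : Finset V) {y : V}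
    (hy : y ∈ B) (hp : 2 ≤ #(A.filter (G.Adj y))) (ht : 2 ≤ #(B.filter (G.Adj y))) :
    ∑ v ∈ B, #(A.filter (G.Adj v)) + 2 ≤ #A * (#B - 1) := by
  have hTs : B.filter (G.Adj y) ⊆ B.erase y := by
    intro v hv
    rw [mem_filter] at hv
    exact mem_erase.2 ⟨hv.2.ne', hv.1⟩
  set T := B.filter (G.Adj y) with hT
  set Y := A.filter (G.Adj y) with hY
  rw [← add_sum_erase B _ hy, ← hY, ← sum_sdiff hTs]
  have e1 : ∑ v ∈ T, #(A.filter (G.Adj v)) ≤ #T * (#A - #Y) := by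
    refine sum_le_card_nsmul _ _ _ fun v hv => ?_
    have hv' := (mem_filter.1 hv).2
    have := deg_pair G htf A hv'
    rw [← hY] at this
    omega
  have e2 : ∑ v ∈ B.erase y \ T, #(A.filter (G.Adj v)) ≤ (#B - 1 - #T) * #A := by
    rw [← card_erase_of_mem hy, ← card_sdiff_of_subset hTs]
    exact sum_le_card_nsmul _ _ _ fun v _ => card_filter_le _ _
  have hYA : #Y ≤ #A := card_filter_le _ _
  have hTB : #T ≤ #B - 1 := by rw [← card_erase_of_mem hy]; exact card_le_card hTs
  obtain ⟨r, hr⟩ := Nat.exists_eq_add_of_le hYA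
  obtain ⟨s, hs⟩ := Nat.exists_eq_add_of_le hTB
  have e3 : #A - #Y = r := by omega
  have e4 : #B - 1 - #T = s := by omega
  rw [e3] at e1
  rw [e4] at e2
  have e5 : #A * (#B - 1) = #T * r + s * #A + #Y * #T := by rw [hs, hr]; ring
  have e6 : #Y + 2 ≤ #Y * #T := by nlinarith
  omega

theorem card_le_of_ne (G : SimpleGraph V) {u y z v v' : V} 
    (h : [u, y, z, v, v'].Nodup) : 5 ≤ Fintype.card V := by
  simpa using h.length_le_card

set_option maxHeartbeats 2000000 in
theorem core (G : SimpleGraph V) [DecidableRel G.Adj] (n : ℕ) (hn : Fintype.card V = n)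
    (hnb : ¬ G.Colorable 2)
    (htf : ∀ a b c, G.Adj a b → G.Adj b c → G.Adj a c → False)
    (hl : kthEig (SKab ((n - 1) / 2) (n / 2)) 0 ≤ kthEig G 0) :
    Nonempty (G ≃g SKab ((n - 1) / 2) (n / 2)) := by
  have hV : Nonempty V := by
    by_contra hc
    rw [not_nonempty_iff] at hc
    exact hnb (color_of G (fun _ => True) (fun u => (hc.false u).elim) (fun u => (hc.false u).elim))
  obtain ⟨x, hx0, hx, he⟩ := E2 G
  obtain ⟨u, hu⟩ := Finite.exists_max x
  have hxu : 0 < x u := by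
    obtain ⟨v, hv⟩ := Function.ne_iff.1 hx0
    exact lt_of_lt_of_le (lt_of_le_of_ne (hx v) (fun h => hv h.symm)) (hu v)
  obtain ⟨A, hAd⟩ : ∃ A : Finset V, A = univ.filter (G.Adj u) := ⟨_, rfl⟩
  obtain ⟨B, hBd⟩ : ∃ B : Finset V, B = Aᶜ := ⟨_, rfl⟩
  have hA : ∀ v, v ∈ A ↔ G.Adj u v := by simp [hAd]
  have hB : ∀ v, v ∈ B ↔ v ∉ A := by simp [hBd]
  have hcardAB : #A + #B = n := by rw [hBd, card_add_card_compl, hn]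
  have hAA : ∀ v ∈ A, ∀ w ∈ A, ¬ G.Adj v w := fun v hv w hw h =>
    htf u v w ((hA v).1 hv) h ((hA w).1 hw)
  have huB : u ∈ B := (hB u).2 fun h => G.irrefl ((hA u).1 h)
  have hcost := cost G u A B hA hB hAA x _ he hu hxu
  clear hAd hBd
  -- an edge inside B
  obtain ⟨y, z, hy, hz, hyz⟩ : ∃ y z, y ∈ B ∧ z ∈ B ∧ G.Adj y z := by
    by_contra hc
    push Not at hc
    exact hnb (color_of G (· ∈ A) (fun a b h ha hb => hAA a ha b hb h)
      (fun a b h ha hb => hc a b ((hB a).2 ha) ((hB b).2 hb) h))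
  -- numerical consequences
  have hnum : 5 ≤ n → ∃ a b : ℕ, 1 ≤ a ∧ a ≤ b ∧ (b = a ∨ b = a + 1) ∧ (n-1)/2 = a + 1 ∧
      n / 2 = b + 1 ∧ n = a + b + 3 ∧
      (∑ v ∈ B, #(A.filter (G.Adj v)) + 2 ≤ (a + 1) * (b + 1) → False) := by
    intro h5
    refine ⟨(n-1)/2 - 1, n/2 - 1, by omega, by omega, by omega, by omega, by omega, by omega, ?_⟩
    intro hE
    obtain ⟨a, ha⟩ : ∃ a, a = (n-1)/2 - 1 := ⟨_, rfl⟩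
    obtain ⟨b, hb⟩ : ∃ b, b = n/2 - 1 := ⟨_, rfl⟩
    rw [show (n-1)/2 = a + 1 by omega, show n/2 = b + 1 by omega] at hl
    rw [← ha, ← hb] at hE
    have h1 := sk_lower a b
    have h2 : kthEig (SKab (a+1) (b+1)) 0 ^ 2 ≤ kthEig G 0 ^ 2 :=
      pow_le_pow_left₀ (sk_pos a b).le hl 2
    have h3 : ((∑ v ∈ B, #(A.filter (G.Adj v)) : ℕ) : ℝ) + 2 ≤ (a + 1) * (b + 1) := by
      exact_mod_cast hE
    have h4 : (0:ℝ) < 2 / (a + 1) := by positivity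
    linarith
  -- no two disjoint edges inside B
  have hmatch : ∀ y z y' z', G.Adj y z → G.Adj y' z' → y ∈ B → z ∈ B → y' ∈ B → z' ∈ B →
      y ≠ y' → y ≠ z' → z ≠ y' → z ≠ z' → False := by
    intro y z y' z' h h' hy hz hy' hz' h1 h2 h3 h4
    have hnu : ∀ v ∈ B, ¬ G.Adj u v := fun v hv h => (hB v).1 hv ((hA v).2 h)
    have h5 : 5 ≤ n := by
      rw [← hn]
      have e1 : u ≠ y := fun e => hnu z hz (e ▸ h)
      have e2 : u ≠ z := fun e => hnu y hy (e ▸ h.symm)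
      have e3 : u ≠ y' := fun e => hnu z' hz' (e ▸ h')
      have e4 : u ≠ z' := fun e => hnu y' hy' (e ▸ h'.symm)
      exact card_le_of_ne G (u := u) (y := y) (z := z) (v := y') (v' := z')
        (by simp [e1, e2, e3, e4, h1, h2, h3, h4, h.ne, h'.ne])
    obtain ⟨a, b, ha, hab, hab', -, -, hn', hfalse⟩ := hnum h5
    apply hfalse
    obtain ⟨hB2, hE⟩ := two_match G htf A B h h' hy hz hy' hz' h1 h2 h3 h4
    have : #A * (#B - 2) ≤ b * (a + 1) := by
      apply amgm _ _ _ _ (by omega) (by omega)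
    nlinarith
  -- a centre of the star
  obtain ⟨y, z, hy, hz, hyz, hst⟩ : ∃ y z, y ∈ B ∧ z ∈ B ∧ G.Adj y z ∧
      ∀ a ∈ B, ∀ b ∈ B, G.Adj a b → a = y ∨ b = y := by
    by_contra hc
    push Not at hc
    obtain ⟨a, ha, b, hb, hab, h1, h2⟩ := hc y z hy hz hyz
    obtain ⟨c, hc', d, hd, hcd, h3, h4⟩ := hc z y hz hy hyz.symm
    have m1 := hmatch y z a b hyz hab hy hz ha hb
    have m2 := hmatch y z c d hyz hcd hy hz hc' hd
    have m3 := hmatch a b c d hab hcd ha hb hc' hd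
    have s1 := hyz.ne
    have s2 := hab.ne
    have s3 := hcd.ne
    have hza : a = z ∨ b = z := by grind
    have hyc : c = y ∨ d = y := by grind
    have t1 := htf y z
    have := hab.symm
    have := hcd.symm
    rcases hza with rfl | rfl <;> rcases hyc with rfl | rfl <;> grind
  clear hmatch
  have hnu : ∀ v ∈ B, ¬ G.Adj u v := fun v hv h => (hB v).1 hv ((hA v).2 h)
  have huy : u ≠ y := fun e => hnu z hz (e ▸ hyz)
  have hyA : y ∉ A := (hB y).1 hy
  obtain ⟨v, hvA, hyv⟩ : ∃ v ∈ A, G.Adj y v := by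
    by_contra hc
    push Not at hc
    refine hnb (color_of G (fun v => v ∈ A ∨ v = y) ?_ ?_)
    · rintro a b hab (ha | rfl) (hb | rfl)
      · exact hAA a ha b hb hab
      · exact hc a ha hab.symm
      · exact hc b hb hab
      · exact G.irrefl hab
    · intro a b hab ha hb
      push Not at ha hb
      rcases hst a ((hB a).2 ha.1) b ((hB b).2 hb.1) hab with h | h
      · exact ha.2 h
      · exact hb.2 h
  obtain ⟨z, hz, hyz, v', hv'A, hzv'⟩ : ∃ z ∈ B, G.Adj y z ∧ ∃ v' ∈ A, G.Adj z v' := by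
    by_contra hc
    push Not at hc
    refine hnb (color_of G (fun v => v ∈ A ∨ (v ∈ B ∧ G.Adj y v)) ?_ ?_)
    · rintro a b hab (ha | ⟨ha, ha'⟩) (hb | ⟨hb, hb'⟩)
      · exact hAA a ha b hb hab
      · exact hc b hb hb' a ha hab.symm
      · exact hc a ha ha' b hb hab
      · exact htf y a b ha' hab hb'
    · intro a b hab ha hb
      push Not at ha hb
      have haB := (hB a).2 ha.1
      have hbB := (hB b).2 hb.1
      rcases hst a haB b hbB hab with rfl | rfl
      · exact hb.2 hbB hab
      · exact ha.2 haB hab.symm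
  have hzA : z ∉ A := (hB z).1 hz
  have h5 : 5 ≤ n := by
    rw [← hn]
    have e1 : u ≠ z := fun e => hnu y hy (e ▸ hyz.symm)
    have e2 : v ≠ v' := fun e => htf y z v hyz (e ▸ hzv') hyv
    have e3 : ∀ a ∈ A, ∀ b ∈ B, b ≠ a := fun a ha b hb e => (hB b).1 hb (e ▸ ha)
    exact card_le_of_ne G (u := u) (y := y) (z := z) (v := v) (v' := v')
      (by simp [e1, e2, huy, hyz.ne, e3 v hvA, e3 v' hv'A, huB, hy, hz])
  obtain ⟨a, b, ha, hab, hab', hk, hk', hn', hfalse⟩ := hnum h5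
  rw [hk, hk'] at hl ⊢
  have hBpos : 0 < #B := card_pos.2 ⟨y, hy⟩
  have hprod : #A * (#B - 1) ≤ (a + 1) * (b + 1) := amgm _ _ _ _ (by omega) (by omega)
  have cy : #(B.erase y) = #B - 1 := card_erase_of_mem hy
  have cz : #(B.erase z) = #B - 1 := card_erase_of_mem hz
  have hBB : ∀ a ∈ B.erase y, ∀ b ∈ B.erase y, ¬ G.Adj a b := by
    intro a ha b hb h
    rw [mem_erase] at ha hb
    rcases hst a ha.2 b hb.2 h with h | h
    · exact ha.1 h
    · exact hb.1 h
  by_cases hp : ∀ c ∈ A, G.Adj y c → c = v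
  · rcases le_total (x y) (x v) with hle | hle
    · refine main_rot (A := A) (B := B.erase y) (p := v) (q := z) (w := y) G ?_ htf hyv hyz hAA hBB hp
        x hx hx0 hle he a b ha hab (by omega) (by rw [cy]; exact hprod) hl
      refine ⟨?_, hyA, by simp, ?_, hvA, mem_erase.2 ⟨hyz.ne', hz⟩⟩
      · intro c hc hc'
        exact (hB c).1 (mem_erase.1 hc').2 hc
      · intro c
        simp only [mem_erase, hB]
        tauto
    · have cA : #(insert y (A.erase v)) = #A := by
        rw [card_insert_of_notMem (by simp [hyA]), card_erase_of_mem hvA]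
        have := card_pos.2 ⟨v, hvA⟩
        omega
      refine main_rot (A := insert y (A.erase v)) (B := B.erase y) (p := y) (q := u) (w := v) G ?_ htf
        hyv.symm ((hA v).1 hvA).symm ?_ hBB ?_
        x hx hx0 hle he a b ha hab (by omega) (by rw [cy, cA]; exact hprod) hl
      · have hvB : v ∉ B := fun h => (hB v).1 h hvA
        refine ⟨?_, by simp [hyv.ne'], by simp [hvB], ?_, by simp, mem_erase.2 ⟨huy, huB⟩⟩
        · intro c hc hc'
          simp only [mem_insert, mem_erase, hB] at hc hc'
          tauto
        · intro c
          simp only [mem_insert, mem_erase, hB]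
          tauto
      · intro c hc d hd h
        simp only [mem_insert, mem_erase] at hc hd
        rcases hc with rfl | hc <;> rcases hd with rfl | hd
        · exact G.irrefl h
        · exact hd.1 (hp d hd.2 h)
        · exact hc.1 (hp c hc.2 h.symm)
        · exact hAA c hc.2 d hd.2 h
      · intro c hc h
        simp only [mem_insert, mem_erase] at hc
        rcases hc with rfl | hc
        · rfl
        · exact absurd h (hAA v hvA c hc.2)
  by_cases ht : ∀ c ∈ B, G.Adj y c → c = z
  · rcases le_total (x z) (x y) with hle | hle
    · refine main_rot (A := B.erase z) (B := A) (p := y) (q := v') (w := z) G ?_ htf hyz.symm hzv' ?_ hAA ?_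
        x hx hx0 hle he a b ha hab (by omega) (by rw [cz, mul_comm]; exact hprod) hl
      · refine ⟨?_, by simp, hzA, ?_, mem_erase.2 ⟨hyz.ne, hy⟩, hv'A⟩
        · intro c hc hc'
          exact (hB c).1 (mem_erase.1 hc).2 hc'
        · intro c
          simp only [mem_erase, hB]
          tauto
      · intro c hc d hd h
        rw [mem_erase] at hc hd
        rcases hst c hc.2 d hd.2 h with rfl | rfl
        · exact hd.1 (ht d hd.2 h)
        · exact hc.1 (ht c hc.2 h.symm)
      · intro c hc h
        rw [mem_erase] at hc
        rcases hst z hz c hc.2 h with h' | h'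
        · exact absurd h' hyz.ne'
        · exact h'
    · refine main_rot (A := B.erase y) (B := A) (p := z) (q := v) (w := y) G ?_ htf hyz hyv hBB hAA ?_
        x hx hx0 hle he a b ha hab (by omega) (by rw [cy, mul_comm]; exact hprod) hl
      · refine ⟨?_, by simp, hyA, ?_, mem_erase.2 ⟨hyz.ne', hz⟩, hvA⟩
        · intro c hc hc'
          exact (hB c).1 (mem_erase.1 hc).2 hc'
        · intro c
          simp only [mem_erase, hB]
          tauto
      · intro c hc h
        exact ht c (mem_erase.1 hc).2 h
  exfalso
  push Not at hp ht
  obtain ⟨c, hcA, hyc, hcv⟩ := hp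
  obtain ⟨d, hdB, hyd, hdz⟩ := ht
  have hp2 : 2 ≤ #(A.filter (G.Adj y)) :=
    one_lt_card.2 ⟨c, by simp [hcA, hyc], v, by simp [hvA, hyv], hcv⟩
  have ht2 : 2 ≤ #(B.filter (G.Adj y)) :=
    one_lt_card.2 ⟨d, by simp [hdB, hyd], z, by simp [hz, hyz], hdz⟩
  exact hfalse ((star_bound G htf A B hy hp2 ht2).trans hprod)

end

/-- If `G` is a non-bipartite graph of order `n` with
`λ₁(G) ≥ λ₁(S(K_{⌊(n-1)/2⌋, ⌈(n-1)/2⌉}))`, then `G` contains a triangle unless `G`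
is isomorphic to `S(K_{⌊(n-1)/2⌋, ⌈(n-1)/2⌉})`.  (Note `⌈(n-1)/2⌉ = n/2` in `ℕ`.) -/
theorem stmt_2 {V : Type*} [Fintype V] [DecidableEq V] (G : SimpleGraph V)
    [DecidableRel G.Adj] (n : ℕ) (hn : Fintype.card V = n) (hnb : ¬ G.Colorable 2)
    (hl : kthEig (SKab ((n - 1) / 2) (n / 2)) 0 ≤ kthEig G 0) :
    ¬ G.CliqueFree 3 ∨ Nonempty (G ≃g SKab ((n - 1) / 2) (n / 2)) := by
  by_cases h : G.CliqueFree 3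
  · right
    refine core G n hn hnb ?_ hl
    intro a b c hab hbc hac
    exact h {a, b, c} (SimpleGraph.is3Clique_triple_iff.2 ⟨hab, hac, hbc⟩)
  · left
    exact h
end

section
/- Every graph G with m edges whose largest adjacency eigenvalue satisfies λ₁ > √m contains a triangle. Equivalently (Nosal's theorem), every triangle-free graph with m edges satisfies λ₁ ≤ √m. -/
open Matrix Finset

theorem nosal_degree_sum {V : Type*} [Fintype V] [DecidableEq V] (G : SimpleGraph V)
    [DecidableRel G.Adj] (h : G.CliqueFree 3) (u : V) :
    ∑ v ∈ G.neighborFinset u, G.degree v ≤ G.edgeFinset.card := by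
  have h1 : ∀ v ∈ G.neighborFinset u, G.degree v = (G.incidenceFinset v).card := by
    intro v _
    rw [G.card_incidenceFinset_eq_degree]
  rw [Finset.sum_congr rfl h1, ← Finset.card_biUnion]
  · apply Finset.card_le_card
    intro e he
    rw [Finset.mem_biUnion] at he
    obtain ⟨v, _, he⟩ := he
    rw [SimpleGraph.mem_incidenceFinset] at he
    exact SimpleGraph.mem_edgeFinset.2 he.1
  · intro v hv w hw hvw
    rw [Function.onFun, Finset.disjoint_left]
    intro e hev hew
    rw [SimpleGraph.mem_incidenceFinset] at hev hew
    have hadj : G.Adj v w := G.adj_of_mem_incidenceSet hvw hev hew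
    rw [Finset.mem_coe, SimpleGraph.mem_neighborFinset] at hv hw
    exact h {u, v, w} (SimpleGraph.is3Clique_triple_iff.2 ⟨hv, hw, hadj⟩)

theorem nosal_eig {V : Type*} [Fintype V] [DecidableEq V] (G : SimpleGraph V)
    [DecidableRel G.Adj] (h : G.CliqueFree 3) (l : ℝ) (x : V → ℝ) (hx : x ≠ 0)
    (hl : G.adjMatrix ℝ *ᵥ x = l • x) : l ≤ Real.sqrt (G.edgeFinset.card : ℝ) := by
  obtain ⟨z, hz⟩ := Function.ne_iff.1 hx
  obtain ⟨u, -, hu⟩ := Finset.exists_max_image Finset.univ (fun v => |x v|) ⟨z, mem_univ z⟩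
  have hpos : 0 < |x u| := lt_of_lt_of_le (abs_pos.2 hz) (hu z (mem_univ z))
  have hs : ∀ v, ∑ w ∈ G.neighborFinset v, x w = l * x v := by
    intro v
    have := congrFun hl v
    rwa [SimpleGraph.adjMatrix_mulVec_apply] at this
  have h2 : ∑ v ∈ G.neighborFinset u, ∑ w ∈ G.neighborFinset v, x w = l ^ 2 * x u := by
    simp_rw [hs]
    rw [← Finset.mul_sum, hs]
    ring
  have h3 : l ^ 2 * |x u| ≤ (G.edgeFinset.card : ℝ) * |x u| := by
    calc l ^ 2 * |x u| = |l ^ 2 * x u| := by rw [abs_mul, abs_of_nonneg (sq_nonneg l)]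
      _ = |∑ v ∈ G.neighborFinset u, ∑ w ∈ G.neighborFinset v, x w| := by rw [h2]
      _ ≤ ∑ v ∈ G.neighborFinset u, ∑ w ∈ G.neighborFinset v, |x w| :=
          (Finset.abs_sum_le_sum_abs _ _).trans
            (Finset.sum_le_sum fun v _ => Finset.abs_sum_le_sum_abs _ _)
      _ ≤ ∑ v ∈ G.neighborFinset u, ∑ w ∈ G.neighborFinset v, |x u| :=
          Finset.sum_le_sum fun v _ => Finset.sum_le_sum fun w _ => hu w (mem_univ w)
      _ = ((∑ v ∈ G.neighborFinset u, G.degree v : ℕ) : ℝ) * |x u| := by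
          simp [Finset.sum_mul]
      _ ≤ _ := by
          have := nosal_degree_sum G h u
          gcongr
  exact Real.le_sqrt_of_sq_le (le_of_mul_le_mul_right h3 hpos)

theorem nosal_kth {V : Type*} [Fintype V] [DecidableEq V] (G : SimpleGraph V)
    [DecidableRel G.Adj] (h : G.CliqueFree 3) :
    kthEig G 0 ≤ Real.sqrt (G.edgeFinset.card : ℝ) := by
  unfold kthEig
  split_ifs with hc
  · unfold adjEig
    generalize (Fintype.equivFin V).symm _ = i
    refine nosal_eig G h _ _ ?_ ((adjMatrix_isHermitian G).mulVec_eigenvectorBasis i)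
    intro h0
    apply (adjMatrix_isHermitian G).eigenvectorBasis.orthonormal.ne_zero i
    ext j
    exact congrFun h0 j
  · exact Real.sqrt_nonneg _

/-- Every graph with `m` edges and `λ₁ > √m` contains a triangle; equivalently
(Nosal's theorem), every triangle-free graph with `m` edges has `λ₁ ≤ √m`. -/
theorem stmt_3 {V : Type*} [Fintype V] [DecidableEq V] (G : SimpleGraph V)
    [DecidableRel G.Adj] :
    (Real.sqrt (G.edgeFinset.card : ℝ) < kthEig G 0 → ¬ G.CliqueFree 3) ∧
    (G.CliqueFree 3 → kthEig G 0 ≤ Real.sqrt (G.edgeFinset.card : ℝ)) :=  by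
  exact ⟨fun hlt hf => absurd (nosal_kth G hf) (not_le.2 hlt), nosal_kth G⟩
end

section
/- Let G be a non-bipartite graph on n vertices whose shortest odd cycle has length at least 2k+3 (k ≥ 1). Then the number of edges of G satisfies e(G) ≤ ((n−(2k−1))/2)² + 2k − 1. -/
open Finset

namespace OddGirthAux

variable {V : Type*} {G : SimpleGraph V}

/-- A segment of a walk. -/
lemma exists_segment {u v : V} (w : G.Walk u v) (i d : ℕ) (h : i + d ≤ w.length) :
    ∃ p : G.Walk (w.getVert i) (w.getVert (i + d)), p.length = d := by
  induction d with
  | zero => exact ⟨SimpleGraph.Walk.nil, rfl⟩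
  | succ d ih =>
    obtain ⟨p, hp⟩ := ih (by omega)
    exact ⟨p.concat (w.adj_getVert_succ (i := i + d) (by omega)), by simp [hp]⟩

/-- The complementary segment of a closed walk. -/
lemma exists_cosegment {u : V} (w : G.Walk u u) (i j : ℕ) (hij : i ≤ j) (h : j ≤ w.length) :
    ∃ p : G.Walk (w.getVert j) (w.getVert i), p.length = w.length - j + i := by
  refine ⟨(w.drop j).append (w.take i), ?_⟩
  rw [SimpleGraph.Walk.length_append, SimpleGraph.Walk.drop_length,
    SimpleGraph.Walk.take_length, min_eq_left (by omega)]

/-- Distinct indices carry distinct vertices in a minimal odd closed walk. -/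
lemma ne_of_minimal {u : V} (w : G.Walk u u) (hw : Odd w.length)
    (hmin : ∀ (v : V) (p : G.Walk v v), Odd p.length → w.length ≤ p.length)
    (i j : ℕ) (hij : i < j) (hj : j ≤ w.length) (hne : j < w.length + i) :
    w.getVert i ≠ w.getVert j := by
  intro he
  obtain ⟨p, hp⟩ := exists_segment w i (j - i) (by omega)
  obtain ⟨q, hq⟩ := exists_cosegment w i j hij.le hj
  rcases Nat.even_or_odd (j - i) with h | h
  · have := hmin _ (q.copy rfl he) (by
      rw [SimpleGraph.Walk.length_copy, hq]; grind)
    rw [SimpleGraph.Walk.length_copy, hq] at this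
    omega
  · have e : w.getVert (i + (j - i)) = w.getVert i := by
      rw [he]; congr 1; omega
    have := hmin _ (p.copy rfl e) (by
      rw [SimpleGraph.Walk.length_copy, hp]; exact h)
    rw [SimpleGraph.Walk.length_copy, hp] at this
    omega

/-- Two neighbours on a minimal odd closed walk are at distance two along it. -/
lemma diff_of_adj {u : V} (w : G.Walk u u) (hw : Odd w.length)
    (hmin : ∀ (v : V) (p : G.Walk v v), Odd p.length → w.length ≤ p.length)
    (x : V) (i j : ℕ) (hij : i < j) (hj : j < w.length)
    (hi : G.Adj x (w.getVert i)) (hjx : G.Adj x (w.getVert j)) :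
    j = i + 2 ∨ j + 2 = i + w.length := by
  obtain ⟨d, rfl⟩ := Nat.exists_eq_add_of_lt hij
  obtain ⟨p, hp⟩ := exists_segment w i (d + 1) (by omega)
  obtain ⟨q, hq⟩ := exists_cosegment w i (i + d + 1) hij.le hj.le
  rcases Nat.even_or_odd (d + 1) with h | h
  · have hl : ((q.cons hjx).concat hi.symm).length = w.length - (i + d + 1) + i + 2 := by
      simp [hq]
    have := hmin _ ((q.cons hjx).concat hi.symm) (by rw [hl]; grind)
    rw [hl] at this
    left
    have : d + 1 ≠ 1 := by rintro h1; rw [h1] at h; exact absurd h (by decide)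
    omega
  · have hl : ((p.cons hi).concat hjx.symm).length = d + 1 + 2 := by
      simp [hp]
    have := hmin _ ((p.cons hi).concat hjx.symm) (by rw [hl]; grind)
    rw [hl] at this
    right
    have : i + d + 1 + 2 ≠ i + w.length + 1 := by
      intro h1
      have : w.length = d + 2 := by omega
      rw [this] at hw
      grind
    by_contra hc
    grind

end OddGirthAux

open OddGirthAux

theorem stmt_12 {V : Type*} [Fintype V] [DecidableEq V] (G : SimpleGraph V)
    [DecidableRel G.Adj] (n k : ℕ) (hn : Fintype.card V = n) (hk : 1 ≤ k)
    (hnb : ¬ G.Colorable 2)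
    (hodd : ∀ (v : V) (w : G.Walk v v), w.IsCycle → Odd w.length →
      2 * k + 3 ≤ w.length) :
    (G.edgeFinset.card : ℝ) ≤ (((n : ℝ) - (2 * k - 1)) / 2) ^ 2 + 2 * k - 1 := by
  classical
  -- a shortest odd closed walk
  obtain ⟨u, w, hw, hmin⟩ : ∃ (u : V) (w : G.Walk u u), Odd w.length ∧
      ∀ (v : V) (p : G.Walk v v), Odd p.length → w.length ≤ p.length := by
    have hex : ∃ l : ℕ, ∃ (u : V) (w : G.Walk u u), Odd w.length ∧ w.length = l := by
      rw [SimpleGraph.two_colorable_iff_forall_loop_even] at hnb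
      push Not at hnb
      obtain ⟨u, w, h⟩ := hnb
      exact ⟨_, u, w, by simpa using h, rfl⟩
    obtain ⟨u, w, h1, h2⟩ := Nat.find_spec hex
    exact ⟨u, w, h1, fun v p hp => h2 ▸ Nat.find_min' hex ⟨v, p, hp, rfl⟩⟩
  have h3 : 3 ≤ w.length := by
    by_contra hlt
    have h1 : w.length = 1 := by
      obtain ⟨m, hm⟩ := hw
      omega
    have := w.adj_getVert_succ (i := 0) (by omega)
    rw [zero_add, SimpleGraph.Walk.getVert_of_length_le w (i := 1) (by omega),
      SimpleGraph.Walk.getVert_zero] at this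
    exact G.loopless.irrefl _ this
  have hcyc : w.IsCycle := by
    rw [SimpleGraph.Walk.isCycle_iff_isPath_tail_and_le_length]
    refine ⟨?_, h3⟩
    rw [← SimpleGraph.Walk.IsPath.getVert_injOn_iff]
    have key : ∀ i j, i < j → j ≤ w.tail.length →
        w.tail.getVert i ≠ w.tail.getVert j := by
      intro i j hij hj
      rw [SimpleGraph.Walk.length_tail] at hj
      rw [SimpleGraph.Walk.getVert_tail, SimpleGraph.Walk.getVert_tail]
      exact ne_of_minimal w hw hmin _ _ (by omega) (by omega) (by omega)
    intro i hi j hj he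
    rcases lt_trichotomy i j with h | h | h
    · exact absurd he (key i j h hj)
    · exact h
    · exact absurd he.symm (key j i h hi)
  have hg := hodd u w hcyc hw
  set g := w.length with hgdef
  -- its vertex set
  set S : Finset V := (Finset.range g).image w.getVert with hS
  have hScard : #S = g := by
    rw [hS, Finset.card_image_of_injOn, Finset.card_range]
    intro i hi j hj he
    simp only [Finset.coe_range, Set.mem_Iio] at hi hj
    rcases lt_trichotomy i j with h | h | h
    · exact absurd he (ne_of_minimal w hw hmin i j h (by omega) (by omega))
    · exact h
    · exact absurd he.symm (ne_of_minimal w hw hmin j i h (by omega) (by omega))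
  have hA : ∀ x, #(S.filter (G.Adj x)) ≤ 2 := by
    intro x
    by_contra hlt
    have h3 : 2 < #((Finset.range g).filter (fun i => G.Adj x (w.getVert i))) := by
      have : S.filter (G.Adj x) =
          ((Finset.range g).filter (fun i => G.Adj x (w.getVert i))).image w.getVert := by
        rw [hS, Finset.filter_image]
      rw [this] at hlt
      have := Finset.card_image_le (s := (Finset.range g).filter
        (fun i => G.Adj x (w.getVert i))) (f := w.getVert)
      omega
    obtain ⟨a, b, c, ha, hb, hc, hab, hac, hbc⟩ := Finset.two_lt_card_iff.1 h3
    simp only [Finset.mem_filter, Finset.mem_range] at ha hb hc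
    have D : ∀ i j, (i < g ∧ G.Adj x (w.getVert i)) → (j < g ∧ G.Adj x (w.getVert j)) →
        i < j → j = i + 2 ∨ j + 2 = i + g := fun i j hi hj hij =>
      diff_of_adj w hw hmin x i j hij hj.1 hi.2 hj.2
    have d1 := D a b ha hb
    have d2 := D b a hb ha
    have d3 := D a c ha hc
    have d4 := D c a hc ha
    have d5 := D b c hb hc
    have d6 := D c b hc hb
    obtain ⟨m, hm⟩ := hw
    omega
  -- Mantel outside
  have hT : #Sᶜ = n - g := by rw [Finset.card_compl, hn, hScard]
  have hgn : g ≤ n := by rw [← hScard, ← hn]; exact Finset.card_le_univ S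
  have hB : 2 * ∑ x ∈ Sᶜ, #(Sᶜ.filter (G.Adj x)) ≤ (n - g) ^ 2 := by
    let H : SimpleGraph {x // x ∈ Sᶜ} := G.comap Subtype.val
    have hfree : H.CliqueFree (2 + 1) := by
      intro t ht
      obtain ⟨a, b, c, hab, hac, hbc, -⟩ := SimpleGraph.is3Clique_iff.1 ht
      have hab' : G.Adj a b := hab
      have hac' : G.Adj a c := hac
      have hbc' : G.Adj b c := hbc
      have := hmin _ (((SimpleGraph.Walk.nil.cons hac'.symm).cons hbc').cons hab')
        (by simp; decide)
      simp at this
      omega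
    have h1 := hfree.card_edgeFinset_le
    have hsum := H.sum_degrees_eq_twice_card_edges
    have hdeg : ∀ x : {x // x ∈ Sᶜ}, H.degree x = #(Sᶜ.filter (G.Adj x)) := by
      intro x
      rw [← SimpleGraph.card_neighborFinset_eq_degree,
        ← Finset.card_map (Function.Embedding.subtype _)]
      congr 1
      ext y
      simp only [Finset.mem_map, SimpleGraph.mem_neighborFinset, Finset.mem_filter]
      constructor
      · rintro ⟨z, hz, rfl⟩
        exact ⟨z.2, hz⟩
      · rintro ⟨hy, hxy⟩
        exact ⟨⟨y, hy⟩, hxy, rfl⟩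
    have h2 : ∑ x ∈ Sᶜ, #(Sᶜ.filter (G.Adj x)) = 2 * #H.edgeFinset := by
      rw [← hsum, ← Finset.sum_coe_sort]
      exact Finset.sum_congr rfl fun x _ => (hdeg x).symm
    rw [h2]
    simp only [Fintype.card_coe, hT] at h1
    have hc : ((n - g) % 2).choose 2 = 0 := by
      rcases Nat.mod_two_eq_zero_or_one (n - g) with h | h <;> rw [h] <;> rfl
    rw [hc] at h1
    have := Nat.sub_le ((n - g) ^ 2) (((n - g) % 2) ^ 2)
    omega
  -- counting
  have hsplit : ∀ x, G.degree x = #(S.filter (G.Adj x)) + #(Sᶜ.filter (G.Adj x)) := by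
    intro x
    rw [← SimpleGraph.card_neighborFinset_eq_degree, SimpleGraph.neighborFinset_eq_filter,
      ← Finset.card_union_of_disjoint, ← Finset.filter_union, Finset.union_compl]
    exact Finset.disjoint_filter_filter disjoint_compl_right
  have hdc : ∑ x ∈ S, #(Sᶜ.filter (G.Adj x)) = ∑ x ∈ Sᶜ, #(S.filter (G.Adj x)) := by
    simp_rw [Finset.card_filter]
    rw [Finset.sum_comm]
    simp_rw [G.adj_comm]
  have hS1 : ∑ x, #(S.filter (G.Adj x)) ≤ 2 * n := by
    have := Finset.sum_le_card_nsmul (Finset.univ : Finset V) _ 2 (fun x _ => hA x)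
    rw [Finset.card_univ, hn] at this
    simpa [mul_comm] using this
  have hS2 : ∑ x ∈ Sᶜ, #(S.filter (G.Adj x)) ≤ 2 * (n - g) := by
    have := Finset.sum_le_card_nsmul Sᶜ _ 2 (fun x _ => hA x)
    rw [hT] at this
    simpa [mul_comm] using this
  have htot := G.sum_degrees_eq_twice_card_edges
  simp_rw [hsplit, Finset.sum_add_distrib] at htot
  rw [← Finset.sum_add_sum_compl S (fun x => #(Sᶜ.filter (G.Adj x))), hdc] at htot
  obtain ⟨y, rfl⟩ := Nat.exists_eq_add_of_le hgn
  rw [Nat.add_sub_cancel_left] at hB hS2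
  obtain ⟨d, hd⟩ := Nat.exists_eq_add_of_le hg
  have hfin : 4 * #G.edgeFinset ≤ 4 * g + 8 * y + y ^ 2 := by omega
  have hfinR : (4 : ℝ) * #G.edgeFinset ≤ 4 * g + 8 * y + y ^ 2 := by exact_mod_cast hfin
  have hdR : (g : ℝ) = 2 * k + 3 + d := by exact_mod_cast hd
  push_cast
  rw [hdR] at hfinR ⊢
  have hd0 : (0 : ℝ) ≤ d := Nat.cast_nonneg d
  have hy0 : (0 : ℝ) ≤ y := Nat.cast_nonneg y
  nlinarith [mul_nonneg hd0 hy0, mul_nonneg hd0 hd0]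
end

section
/- (Erdős) Every non-bipartite triangle-free graph on n vertices has at most (n−1)²/4 + 1 edges. -/
open Finset

theorem aux_mantel {V : Type*} [Fintype V] [DecidableEq V] (G : SimpleGraph V)
    [DecidableRel G.Adj] (h3 : G.CliqueFree 3) :
    4 * G.edgeFinset.card ≤ (Fintype.card V) ^ 2 := by
  have h := SimpleGraph.CliqueFree.card_edgeFinset_le (r := 2) h3
  simp only at h
  rcases Nat.mod_two_eq_zero_or_one (Fintype.card V) with h0 | h0 <;>
  · rw [h0] at h
    norm_num at h
    omega

theorem aux_mantel_set {V : Type*} [Fintype V] [DecidableEq V] (G : SimpleGraph V)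
    [DecidableRel G.Adj] (h3 : G.CliqueFree 3) (S : Finset V) :
    2 * ∑ v ∈ S, #{u ∈ S | G.Adj v u} ≤ #S ^ 2 := by
  have h := aux_mantel (G.induce (S : Set V)) (h3.comap ⟨(SimpleGraph.Embedding.induce _).toCopy⟩)
  have h2 := SimpleGraph.sum_degrees_eq_twice_card_edges (G.induce (S : Set V))
  have h4 : ∑ v : (S : Set V), (G.induce (S : Set V)).degree v
      = ∑ v ∈ S, #{u ∈ S | G.Adj v u} := by
    rw [← Finset.sum_coe_sort S]
    refine Finset.sum_congr rfl fun v _ => ?_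
    rw [← SimpleGraph.card_neighborFinset_eq_degree]
    refine Finset.card_bij (fun u _ => u.1) ?_ ?_ ?_
    · intro a ha
      simpa using ha
    · intro a _ b _ hab
      exact Subtype.ext hab
    · intro b hb
      simp only [Finset.mem_filter] at hb
      exact ⟨⟨b, hb.1⟩, by simpa using hb.2, rfl⟩
  have h5 : Fintype.card (S : Set V) = #S := by simp
  rw [h5] at h
  omega

theorem aux_split {V : Type*} {G : SimpleGraph V} {u : V} (w : G.Walk u u) (i j : ℕ)
    (hij : i ≤ j) (hj : j ≤ w.length) :
    (∃ a : G.Walk (w.getVert i) (w.getVert j), a.length = j - i) ∧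
    (∃ b : G.Walk (w.getVert j) (w.getVert i), b.length = w.length - (j - i)) := by
  constructor
  · refine ⟨((w.drop i).take (j - i)).copy rfl ?_, ?_⟩
    · rw [SimpleGraph.Walk.drop_getVert]; congr 1; omega
    · rw [SimpleGraph.Walk.length_copy, SimpleGraph.Walk.take_length,
        SimpleGraph.Walk.drop_length]
      omega
  · refine ⟨(w.drop j).append (w.take i), ?_⟩
    rw [SimpleGraph.Walk.length_append, SimpleGraph.Walk.take_length,
        SimpleGraph.Walk.drop_length]
    omega

theorem aux_cycle {V : Type*} [Fintype V] [DecidableEq V] (G : SimpleGraph V)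
    [DecidableRel G.Adj] (h3 : G.CliqueFree 3) (hnb : ¬ G.Colorable 2) :
    ∃ C : Finset V, 5 ≤ #C ∧ ∀ v, #{u ∈ C | G.Adj v u} ≤ 2 := by
  have hex : ∃ L, Odd L ∧ ∃ u, ∃ w : G.Walk u u, w.length = L := by
    rw [SimpleGraph.two_colorable_iff_forall_loop_even] at hnb
    push Not at hnb
    obtain ⟨u, w, hw⟩ := hnb
    exact ⟨w.length, by simpa using hw, u, w, rfl⟩
  classical
  obtain ⟨hodd, u, w, hw⟩ := Nat.find_spec hex
  have hmin : ∀ v, ∀ a : G.Walk v v, Odd a.length → Nat.find hex ≤ a.length :=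
    fun v a ha => Nat.find_min' hex ⟨ha, v, a, rfl⟩
  generalize Nat.find hex = L at *
  have hL5 : 5 ≤ L := by
    by_contra hlt
    have hL : L = 1 ∨ L = 3 := by
      obtain ⟨k, rfl⟩ := hodd
      omega
    have hadj : ∀ i < L, G.Adj (w.getVert i) (w.getVert (i + 1)) := fun i hi =>
      w.adj_getVert_succ (by omega)
    have h0 : w.getVert 0 = u := w.getVert_zero
    have h1 : w.getVert L = u := by rw [← hw]; exact w.getVert_length
    rcases hL with rfl | rfl
    · have := hadj 0 (by omega)
      rw [h0, h1] at this
      exact G.loopless.irrefl _ this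
    · have a := hadj 0 (by omega)
      have b := hadj 1 (by omega)
      have c := hadj 2 (by omega)
      rw [h1.trans h0.symm] at c
      exact h3 _ (SimpleGraph.is3Clique_iff.2 ⟨_, _, _, a, c.symm, b, rfl⟩)
  have hinj : ∀ i j, i < j → j < L → w.getVert i ≠ w.getVert j := by
    intro i j hij hj he
    obtain ⟨⟨a, ha⟩, ⟨b, hb⟩⟩ := aux_split w i j hij.le (by omega)
    have m1 := hmin _ (a.copy rfl he.symm)
    have m2 := hmin _ (b.copy he.symm rfl)
    rw [SimpleGraph.Walk.length_copy, Nat.odd_iff] at m1 m2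
    rw [Nat.odd_iff] at hodd
    omega
  have hnbr : ∀ v i j, i < j → j < L → G.Adj v (w.getVert i) → G.Adj v (w.getVert j) →
      j = i + 2 ∨ j + 2 = i + L := by
    intro v i j hij hj hi hj'
    obtain ⟨⟨a, ha⟩, ⟨b, hb⟩⟩ := aux_split w i j hij.le (by omega)
    have m1 := hmin _ ((a.concat hj'.symm).cons hi)
    have m2 := hmin _ ((b.concat hi.symm).cons hj')
    rw [SimpleGraph.Walk.length_cons, SimpleGraph.Walk.length_concat, Nat.odd_iff] at m1 m2
    rw [Nat.odd_iff] at hodd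
    omega
  have hIn : Set.InjOn w.getVert (range L : Set ℕ) := by
    intro i hi j hj he
    simp only [coe_range, Set.mem_Iio] at hi hj
    rcases lt_trichotomy i j with h | h | h
    · exact absurd he (hinj i j h hj)
    · exact h
    · exact absurd he.symm (hinj j i h hi)
  refine ⟨(range L).image w.getVert, ?_, fun v => ?_⟩
  · rw [card_image_of_injOn hIn]; simpa using hL5
  · rw [filter_image]
    refine card_image_le.trans ?_
    by_contra hlt
    push Not at hlt
    obtain ⟨a, ha, b, hb, c, hc, hab, hac, hbc⟩ := two_lt_card.1 hlt
    simp only [mem_filter, mem_range] at ha hb hc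
    have key : ∀ x y, (x < L ∧ G.Adj v (w.getVert x)) → (y < L ∧ G.Adj v (w.getVert y)) →
        x < y → y = x + 2 ∨ y + 2 = x + L := fun x y hx hy hxy =>
      hnbr v x y hxy hy.1 hx.2 hy.2
    have k1 := key a b ha hb
    have k2 := key b a hb ha
    have k3 := key a c ha hc
    have k4 := key c a hc ha
    have k5 := key b c hb hc
    have k6 := key c b hc hb
    rw [Nat.odd_iff] at hodd
    omega

/-- (Erdős) Every non-bipartite triangle-free graph on `n` vertices has at most
`(n-1)²/4 + 1` edges. -/
theorem stmt_14 {V : Type*} [Fintype V] [DecidableEq V] (G : SimpleGraph V)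
    [DecidableRel G.Adj] (n : ℕ) (hn : Fintype.card V = n)
    (h3 : G.CliqueFree 3) (hnb : ¬ G.Colorable 2) :
    (G.edgeFinset.card : ℝ) ≤ ((n : ℝ) - 1) ^ 2 / 4 + 1 := by
  obtain ⟨C, hC5, hC⟩ := aux_cycle G h3 hnb
  have hM := aux_mantel_set G h3 Cᶜ
  have hdeg : ∀ v, G.degree v = #{u ∈ C | G.Adj v u} + #{u ∈ Cᶜ | G.Adj v u} := by
    intro v
    rw [← SimpleGraph.card_neighborFinset_eq_degree, SimpleGraph.neighborFinset_eq_filter,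
      ← card_union_of_disjoint (disjoint_filter_filter disjoint_compl_right), ← filter_union,
      union_compl]
  have hs := G.sum_degrees_eq_twice_card_edges
  simp_rw [hdeg] at hs
  rw [sum_add_distrib, ← sum_add_sum_compl C (fun v => #{u ∈ Cᶜ | G.Adj v u})] at hs
  have h1 : ∑ v, #{u ∈ C | G.Adj v u} ≤ n * 2 := by
    rw [← hn]
    exact sum_le_card_nsmul univ _ 2 (fun v _ => hC v)
  have h2 : ∑ v ∈ C, #{u ∈ Cᶜ | G.Adj v u} ≤ #Cᶜ * 2 := by
    have := sum_card_bipartiteAbove_eq_sum_card_bipartiteBelow (s := C) (t := Cᶜ) G.Adj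
    simp only [bipartiteAbove, bipartiteBelow] at this
    rw [this]
    refine sum_le_card_nsmul _ _ 2 (fun v _ => ?_)
    simpa only [G.adj_comm] using hC v
  have hc : #C + #Cᶜ = n := by rw [card_add_card_compl, hn]
  generalize #Cᶜ = m at *
  generalize #C = L at *
  have hfin : 4 * G.edgeFinset.card ≤ 4 * n + 4 * m + m ^ 2 - 0 := by omega
  simp only [Nat.sub_zero] at hfin
  have hfin' : (4 : ℝ) * G.edgeFinset.card ≤ 4 * n + 4 * m + m ^ 2 := by exact_mod_cast hfin
  have hc' : (n : ℝ) = L + m := by exact_mod_cast hc.symm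
  have hL : (5 : ℝ) ≤ L := by exact_mod_cast hC5
  have hm : (0 : ℝ) ≤ m := Nat.cast_nonneg m
  rw [hc'] at hfin' ⊢
  nlinarith [mul_nonneg (sub_nonneg.2 hL) hm, mul_nonneg (sub_nonneg.2 hL) (sub_nonneg.2 hL)]
end
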